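/- arXiv:1610.00370 — 10 statements merged into one kernel-verified Lean document; each statement's English description precedes it below -/
import Mathlib

section
/- Let Q = ∏_{n∈ℕ}[0,1] be the Hilbert cube and ι : Q → Q the map ι((x_n)_{n∈ℕ}) = (x_n/2 + 1/4)_{n∈ℕ}. Let M, N ⊆ Q be compact subsets and let R ⊆ M³ and S ⊆ N³ be closed. Then there exists a homeomorphism h : M → N with (h×h×h)[R] = S if and only if there exists a homeomorphism g of Q onto itself such that g[ι[M]] = ι[N] and (g×g×g)[(ι×ι×ι)[R]] = (ι×ι×ι)[S]. -/
/-!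
`ℝ` acts on `[0, 1]` by `s ↦ s ^ exp r`, freely and transitively on `(0, 1)`, so `ℝ^ℕ` acts on the
Hilbert cube `Q` with the pseudo-interior `(0, 1)^ℕ` as a free orbit. Given a compact subset of the
pseudo-interior, split `Q ≅ Q × Q` by splitting the coordinates: adding large multiples of the
first half of the coordinates to the bounded logarithmic parameters of the second half makes one
factor injective on the compact set. By Tietze, any continuous translation of the other factor can
then be made a function of that injective factor, and Klee's trick of translating, swapping the
factors and translating again matches any two compact subsets of the pseudo-interior along a given
homeomorphism. Hence every homeomorphism between such subsets extends to `Q`.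
-/

open Set

/-- The Hilbert cube `Q = ∏_{n ∈ ℕ} [0,1]`. -/
abbrev HilbertCube : Type := ℕ → unitInterval

/-- The map `ι((x_n)_n) = (x_n/2 + 1/4)_n` on the Hilbert cube. -/
noncomputable def iotaHC : HilbertCube → HilbertCube := fun x n =>
  ⟨(x n : ℝ) / 2 + 1 / 4, by
    constructor
    · have h := (x n).2.1; linarith
    · have h := (x n).2.2; linarith⟩

/-- The coordinatewise action of a map on triples. -/
def cube3 {A B : Type*} (f : A → B) : A × A × A → B × B × B :=
  fun p => (f p.1, f p.2.1, f p.2.2)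

section Shear

universe u

variable {G Y : Type*} {X : Type u} [TopologicalSpace G] [TopologicalSpace X]
  [TopologicalSpace Y] [AddGroup G]

/-- The shear of `X × Y` over `X` along a flow on `Y`: the fibre over `x` flows for time `c x`. -/
def shearHomeomorph [ContinuousNeg G] (φ : Flow G Y) (c : C(X, G)) : X × Y ≃ₜ X × Y where
  toFun p := (p.1, φ (c p.1) p.2)
  invFun p := (p.1, φ (-c p.1) p.2)
  left_inv p := by simp [← φ.map_add]
  right_inv p := by simp [← φ.map_add]
  continuous_toFun := continuous_fst.prodMk (φ.continuous (by fun_prop) continuous_snd)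
  continuous_invFun := continuous_fst.prodMk (φ.continuous (by fun_prop) continuous_snd)

variable {K : Type*} [TopologicalSpace K] [CompactSpace K]

theorem exists_shearHomeomorph_apply_eq [ContinuousNeg G] [TietzeExtension.{u} G] [NormalSpace X]
    [T2Space X] (φ : Flow G Y) {p : K → X} (hp : Continuous p) (hp_inj : Function.Injective p)
    {c : K → G} (hc : Continuous c) :
    ∃ C : C(X, G), ∀ k y, shearHomeomorph φ C (p k, y) = (p k, φ (c k) y) := by
  obtain ⟨C, hC⟩ := ContinuousMap.exists_extension' (hp.isClosedEmbedding hp_inj) ⟨c, hc⟩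
  have hC_apply (k : K) : C (p k) = c k := congrFun hC k
  exact ⟨C, fun k y ↦ by simp [shearHomeomorph, hC_apply]⟩

/-- Klee's trick, writing `a` for `φ (a k) o`: the chain
`(a, b) ↦ (a, a') ↦ (a', a) ↦ (a', b')` consists of a shear, the swap, and a shear. -/
theorem exists_homeomorph_prod_flow_apply_eq [IsTopologicalAddGroup G] [TietzeExtension.{u} G]
    [NormalSpace X] [T2Space X] (φ : Flow G X) {o : X} (ho : Function.Injective fun r ↦ φ r o)
    {a b a' b' : K → G} (ha : Continuous a) (hb : Continuous b) (ha' : Continuous a')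
    (hb' : Continuous b') (ha_inj : Function.Injective a) (ha'_inj : Function.Injective a') :
    ∃ Φ : X × X ≃ₜ X × X, ∀ k, Φ (φ (a k) o, φ (b k) o) = (φ (a' k) o, φ (b' k) o) := by
  obtain ⟨C, hC⟩ := exists_shearHomeomorph_apply_eq φ (φ.continuous ha continuous_const)
    (ho.comp ha_inj) (ha'.sub hb)
  obtain ⟨D, hD⟩ := exists_shearHomeomorph_apply_eq φ (φ.continuous ha' continuous_const)
    (ho.comp ha'_inj) (hb'.sub ha)
  refine ⟨(shearHomeomorph φ C).trans ((Homeomorph.prodComm X X).trans (shearHomeomorph φ D)),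
    fun k ↦ ?_⟩
  simp [hC, hD, ← φ.map_add]

end Shear

/-- The product of a family of flows, with independent times in the different factors. -/
def piFlow {ι : Type*} {G X : ι → Type*} [∀ i, TopologicalSpace (G i)]
    [∀ i, TopologicalSpace (X i)] [∀ i, AddMonoid (G i)] (φ : ∀ i, Flow (G i) (X i)) :
    Flow (∀ i, G i) (∀ i, X i) where
  toFun r x i := φ i (r i) (x i)
  cont' := continuous_pi fun i ↦ (φ i).continuous (by fun_prop) (by fun_prop)
  map_add' r t x := funext fun i ↦ (φ i).map_add (r i) (t i) (x i)
  map_zero' x := funext fun i ↦ (φ i).map_zero_apply (x i)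

/-- The flow `s ↦ s ^ exp r` on `[0, 1]`, which fixes the endpoints and is free and transitive on
`(0, 1)`. -/
noncomputable def powFlow : Flow ℝ unitInterval where
  toFun r s := ⟨(s : ℝ) ^ Real.exp r, Real.rpow_nonneg s.2.1 _,
    Real.rpow_le_one s.2.1 s.2.2 (Real.exp_pos r).le⟩
  cont' := by
    refine Continuous.subtype_mk (Continuous.rpow (by fun_prop) (by fun_prop) fun p ↦ ?_) _
    exact Or.inr (Real.exp_pos p.1)
  map_add' r t s := by
    ext
    simp [← Real.rpow_mul s.2.1, Real.exp_add, mul_comm]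
  map_zero' s := by simp

/-- The point `e⁻¹` of `[0, 1]`, the origin of the orbit `(0, 1)` of `powFlow`. -/
noncomputable def expNegOne : unitInterval :=
  ⟨Real.exp (-1), (Real.exp_pos _).le, Real.exp_le_one_iff.2 (by norm_num)⟩

theorem coe_powFlow_expNegOne (r : ℝ) : (powFlow r expNegOne : ℝ) = Real.exp (-Real.exp r) := by
  simp [powFlow, expNegOne, ← Real.exp_mul]

theorem powFlow_expNegOne_injective : Function.Injective fun r ↦ powFlow r expNegOne := by
  intro r t h
  have h_coe := congrArg Subtype.val h
  simpa [coe_powFlow_expNegOne] using h_coe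

theorem powFlow_log_neg_log_expNegOne {s : unitInterval} (hs : s ∈ Ioo 0 1) :
    powFlow (Real.log (-Real.log s)) expNegOne = s := by
  have h_pos : (0 : ℝ) < s := hs.1
  have h_log : 0 < -Real.log s := neg_pos.2 (Real.log_neg h_pos hs.2)
  ext
  rw [coe_powFlow_expNegOne, Real.exp_log h_log, neg_neg, Real.exp_log h_pos]

/-- The pseudo-interior `(0, 1)^ℕ` of the Hilbert cube. -/
def pseudoInterior : Set HilbertCube := {x | ∀ n, x n ∈ Ioo 0 1}

/-- The coordinatewise action of `ℝ^ℕ` on the Hilbert cube through `powFlow`; its orbit through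
`cubeOrigin` is the pseudo-interior. -/
noncomputable def cubeFlow : Flow (ℕ → ℝ) HilbertCube := piFlow fun _ ↦ powFlow

/-- The point of the pseudo-interior with all coordinates `e⁻¹`, the origin of its
parametrization by `cubeFlow`. -/
noncomputable def cubeOrigin : HilbertCube := fun _ ↦ expNegOne

theorem cubeFlow_cubeOrigin_injective : Function.Injective fun r ↦ cubeFlow r cubeOrigin :=
  fun _ _ h ↦ funext fun n ↦ powFlow_expNegOne_injective (congrFun h n)

theorem exists_continuous_cubeFlow_eq {K : Type*} [TopologicalSpace K] {f : K → HilbertCube}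
    (hf : Continuous f) (hf_mem : ∀ k, f k ∈ pseudoInterior) :
    ∃ a : K → ℕ → ℝ, Continuous a ∧ ∀ k, cubeFlow (a k) cubeOrigin = f k := by
  refine ⟨fun k n ↦ Real.log (-Real.log (f k n)), continuous_pi fun n ↦ ?_,
    fun k ↦ funext fun n ↦ powFlow_log_neg_log_expNegOne (hf_mem k n)⟩
  have h_coe : Continuous fun k ↦ (f k n : ℝ) := by fun_prop
  have h_pos (k : K) : (0 : ℝ) < f k n := (hf_mem k n).1
  have h_lt (k : K) : (f k n : ℝ) < 1 := (hf_mem k n).2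
  exact (h_coe.log fun k ↦ (h_pos k).ne').neg.log
    fun k ↦ (neg_pos.2 (Real.log_neg (h_pos k) (h_lt k))).ne'

theorem eq_zero_of_forall_nat_mul_abs_le {d C : ℝ} (h : ∀ m : ℕ, m * |d| ≤ C) : d = 0 := by
  by_contra hd
  obtain ⟨m, hm⟩ := Archimedean.arch (C + 1) (abs_pos.2 hd)
  rw [nsmul_eq_mul] at hm
  linarith [h m]

theorem exists_continuousMap_injective_add {K : Type*} {q b : K → ℕ → ℝ} {B : ℕ → ℝ}
    (hB : ∀ k n, |b k n| ≤ B n) (h_inj : Function.Injective fun k ↦ (q k, b k)) :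
    ∃ C : C(ℕ → ℝ, ℕ → ℝ), Function.Injective fun k ↦ C (q k) + b k := by
  -- Every coordinate `q i` is added to infinitely many coordinates of `b`, with weights that
  -- outgrow the bounds `B`, so the sum determines `q` and hence `b`.
  let C : C(ℕ → ℝ, ℕ → ℝ) := ⟨fun x n ↦ n * (B n + 1) * x n.unpair.1, by fun_prop⟩
  refine ⟨C, fun k l hkl ↦ ?_⟩
  have hq : q k = q l := by
    funext i
    refine sub_eq_zero.1 (eq_zero_of_forall_nat_mul_abs_le (C := 2) fun m ↦ ?_)
    set n := Nat.pair i m with hn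
    have h_pos : 0 < B n + 1 := by linarith [hB k n, abs_nonneg (b k n)]
    have h_coord : n * (B n + 1) * q k i + b k n = n * (B n + 1) * q l i + b l n := by
      simpa [C, hn] using congrFun hkl n
    have h_bound : (B n + 1) * (n * |q k i - q l i|) ≤ (B n + 1) * 2 := calc
      (B n + 1) * (n * |q k i - q l i|) = |n * (B n + 1) * (q k i - q l i)| := by
        rw [abs_mul, abs_of_nonneg (mul_nonneg n.cast_nonneg h_pos.le)]
        ring
      _ = |b l n - b k n| := by
        congr 1
        linarith
      _ ≤ |b l n| + |b k n| := abs_sub _ _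
      _ ≤ (B n + 1) * 2 := by linarith [hB k n, hB l n]
    calc (m : ℝ) * |q k i - q l i| ≤ n * |q k i - q l i| := by
          gcongr
          exact Nat.right_le_pair i m
      _ ≤ 2 := le_of_mul_le_mul_left h_bound h_pos
  have hb : b k = b l := by simpa [hq] using hkl
  exact h_inj (Prod.ext hq hb)

/-- The homeomorphism `Q ≅ Q × Q` separating the even and the odd coordinates. -/
def splitHomeomorph : HilbertCube ≃ₜ HilbertCube × HilbertCube :=
  (Homeomorph.piCongrLeft (Y := fun _ ↦ unitInterval) Equiv.natSumNatEquivNat).symm.trans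
    Homeomorph.sumArrowHomeomorphProdArrow

section Extension

variable {K : Type*} [TopologicalSpace K] [CompactSpace K] {f g : K → HilbertCube}

theorem exists_homeomorph_prod_injective_fst (hf : Continuous f) (hf_inj : Function.Injective f)
    (hf_mem : ∀ k, f k ∈ pseudoInterior) :
    ∃ (Ψ : HilbertCube ≃ₜ HilbertCube × HilbertCube) (a b : K → ℕ → ℝ),
      Continuous a ∧ Function.Injective a ∧ Continuous b ∧
        ∀ k, Ψ (f k) = (cubeFlow (a k) cubeOrigin, cubeFlow (b k) cubeOrigin) := by
  have h_split : Continuous fun k ↦ splitHomeomorph (f k) := splitHomeomorph.continuous.comp hf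
  obtain ⟨b, hb, hb_eq⟩ := exists_continuous_cubeFlow_eq h_split.fst
    fun k n ↦ hf_mem k (Equiv.natSumNatEquivNat (Sum.inl n))
  obtain ⟨c, hc, hc_eq⟩ := exists_continuous_cubeFlow_eq h_split.snd
    fun k n ↦ hf_mem k (Equiv.natSumNatEquivNat (Sum.inr n))
  have h_bound (n : ℕ) : ∃ B, ∀ k, |c k n| ≤ B := by
    simpa using isCompact_univ.exists_bound_of_continuousOn
      ((continuous_apply n).comp hc).continuousOn
  choose B hB using h_bound
  let coords : C(HilbertCube, ℕ → ℝ) := ⟨fun x n ↦ x n, by fun_prop⟩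
  have h_inj : Function.Injective fun k ↦ (coords (splitHomeomorph (f k)).1, c k) := by
    intro k l hkl
    obtain ⟨h_fst, h_snd⟩ := Prod.mk.inj hkl
    refine hf_inj (splitHomeomorph.injective (Prod.ext ?_ ?_))
    · exact funext fun n ↦ Subtype.ext (congrFun h_fst n)
    · rw [← hc_eq, ← hc_eq, h_snd]
  obtain ⟨C, hC⟩ := exists_continuousMap_injective_add (fun k n ↦ hB n k) h_inj
  refine ⟨splitHomeomorph.trans
    ((shearHomeomorph cubeFlow (C.comp coords)).trans (Homeomorph.prodComm _ _)),
    _, b, ?_, hC, hb, fun k ↦ ?_⟩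
  · fun_prop
  · simp [shearHomeomorph, cubeFlow.map_add, hb_eq, hc_eq]

theorem exists_homeomorph_apply_eq_of_mem_pseudoInterior
    (hf : Continuous f) (hf_inj : Function.Injective f) (hf_mem : ∀ k, f k ∈ pseudoInterior)
    (hg : Continuous g) (hg_inj : Function.Injective g) (hg_mem : ∀ k, g k ∈ pseudoInterior) :
    ∃ Φ : HilbertCube ≃ₜ HilbertCube, ∀ k, Φ (f k) = g k := by
  obtain ⟨Ψ, a, b, ha, ha_inj, hb, hΨ⟩ := exists_homeomorph_prod_injective_fst hf hf_inj hf_mem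
  obtain ⟨Ψ', a', b', ha', ha'_inj, hb', hΨ'⟩ :=
    exists_homeomorph_prod_injective_fst hg hg_inj hg_mem
  obtain ⟨Φ, hΦ⟩ := exists_homeomorph_prod_flow_apply_eq cubeFlow cubeFlow_cubeOrigin_injective
    ha hb ha' hb' ha_inj ha'_inj
  exact ⟨Ψ.trans (Φ.trans Ψ'.symm), fun k ↦ by simp [hΨ, hΦ, ← hΨ']⟩

end Extension

section Subsets

variable {X Y Z W : Type*} {M : Set X} {N : Set Y}

theorem image_eq_image_iff_exists_homeomorph [TopologicalSpace X] [TopologicalSpace Y]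
    [TopologicalSpace Z] {f : X → Z} {g : Y → Z} (hf : Topology.IsEmbedding f)
    (hg : Topology.IsEmbedding g) :
    f '' M = g '' N ↔ ∃ h : M ≃ₜ N, ∀ x : M, f x = g (h x) := by
  constructor
  · intro h_eq
    let h : M ≃ₜ N := (hf.homeomorphImage M).trans
      ((Homeomorph.setCongr h_eq).trans (hg.homeomorphImage N).symm)
    refine ⟨h, fun x ↦ ?_⟩
    have h_apply : hg.homeomorphImage N (h x) =
        Homeomorph.setCongr h_eq (hf.homeomorphImage M x) := by simp [h]
    exact (congrArg Subtype.val h_apply).symm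
  · rintro ⟨h, hfg⟩
    rw [image_eq_range, image_eq_range, funext hfg]
    exact h.surjective.range_comp fun y : N ↦ g y

/-- The image `(h × h × h)[R]` of a ternary relation under a map defined on a subset `M` only;
triples of `R` outside `M³` are ignored. -/
def tripleImage (h : M → N) (R : Set (X × X × X)) : Set (Y × Y × Y) :=
  {p | ∃ x y z : M, ((x : X), (y : X), (z : X)) ∈ R ∧ p = ((h x : Y), (h y : Y), (h z : Y))}

theorem cube3_injective {f : X → Y} (hf : Function.Injective f) :
    Function.Injective (cube3 f) :=
  hf.prodMap (hf.prodMap hf)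

theorem cube3_image_image_eq_image_tripleImage {R : Set (X × X × X)} (hR : R ⊆ M ×ˢ M ×ˢ M)
    {h : M → N} {e : X → Z} {e' : Y → W} {g : Z → W} (hg : ∀ x : M, g (e x) = e' (h x)) :
    cube3 g '' (cube3 e '' R) = cube3 e' '' tripleImage h R := by
  ext p
  constructor
  · rintro ⟨_, ⟨⟨x, y, z⟩, hr, rfl⟩, rfl⟩
    obtain ⟨hx, hy, hz⟩ := hR hr
    exact ⟨_, ⟨⟨x, hx⟩, ⟨y, hy⟩, ⟨z, hz⟩, hr, rfl⟩, by simp only [cube3, ← hg]⟩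
  · rintro ⟨_, ⟨x, y, z, hr, rfl⟩, rfl⟩
    exact ⟨_, ⟨_, hr, rfl⟩, by simp only [cube3, hg]⟩

end Subsets

theorem isEmbedding_iotaHC : Topology.IsEmbedding iotaHC := by
  have h_cont : Continuous iotaHC :=
    continuous_pi fun n ↦ Continuous.subtype_mk (by fun_prop) _
  refine (h_cont.isClosedEmbedding fun x y hxy ↦ funext fun n ↦ Subtype.ext ?_).isEmbedding
  have h_coord : (x n : ℝ) / 2 + 1 / 4 = (y n : ℝ) / 2 + 1 / 4 :=
    congrArg Subtype.val (congrFun hxy n)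
  linarith

theorem iotaHC_mem_pseudoInterior (x : HilbertCube) : iotaHC x ∈ pseudoInterior := by
  intro n
  have h_nonneg : (0 : ℝ) ≤ x n := (x n).2.1
  have h_le : (x n : ℝ) ≤ 1 := (x n).2.2
  exact ⟨show (0 : ℝ) < x n / 2 + 1 / 4 by linarith, show (x n : ℝ) / 2 + 1 / 4 < 1 by linarith⟩

theorem homeo_iso_iff_ambient_homeo_general {X : Type*} [TopologicalSpace X] {e : X → HilbertCube}
    (he : Topology.IsEmbedding e) (he_mem : ∀ x, e x ∈ pseudoInterior) {M N : Set X}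
    (hM : IsCompact M) {R S : Set (X × X × X)} (hRM : R ⊆ M ×ˢ M ×ˢ M) :
    (∃ h : M ≃ₜ N, tripleImage h R = S) ↔
      ∃ g : HilbertCube ≃ₜ HilbertCube,
        g '' (e '' M) = e '' N ∧ cube3 g '' (cube3 e '' R) = cube3 e '' S := by
  have h_image (g : HilbertCube ≃ₜ HilbertCube) :
      g '' (e '' M) = e '' N ↔ ∃ h : M ≃ₜ N, ∀ x : M, g (e x) = e (h x) := by
    rw [← image_comp]
    exact image_eq_image_iff_exists_homeomorph (g.isEmbedding.comp he) he
  constructor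
  · rintro ⟨h, rfl⟩
    have : CompactSpace M := isCompact_iff_compactSpace.1 hM
    have he_sub {A : Set X} : Topology.IsEmbedding fun x : A ↦ e x := he.comp .subtypeVal
    obtain ⟨g, hg⟩ := exists_homeomorph_apply_eq_of_mem_pseudoInterior
      he_sub.continuous he_sub.injective (fun x ↦ he_mem x)
      (he_sub.continuous.comp h.continuous) (he_sub.injective.comp h.injective)
      fun x ↦ he_mem (h x)
    exact ⟨g, (h_image g).2 ⟨h, hg⟩, cube3_image_image_eq_image_tripleImage hRM hg⟩
  · rintro ⟨g, hMN, hRS⟩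
    obtain ⟨h, hg⟩ := (h_image g).1 hMN
    refine ⟨h, (cube3_injective he.injective).image_injective ?_⟩
    rw [← hRS, cube3_image_image_eq_image_tripleImage hRM hg]

/-- For compact `M, N ⊆ Q` and closed `R ⊆ M³`, `S ⊆ N³`, there is a homeomorphism
`h : M → N` with `(h×h×h)[R] = S` iff there is a homeomorphism `g` of `Q` with
`g[ι[M]] = ι[N]` and `(g×g×g)[(ι×ι×ι)[R]] = (ι×ι×ι)[S]`. -/
theorem homeo_iso_iff_ambient_homeo
    (M N : Set HilbertCube) (hM : IsCompact M) (hN : IsCompact N)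
    (R S : Set (HilbertCube × HilbertCube × HilbertCube))
    (hRM : R ⊆ M ×ˢ M ×ˢ M) (hSN : S ⊆ N ×ˢ N ×ˢ N)
    (hR : IsClosed R) (hS : IsClosed S) :
    (∃ h : M ≃ₜ N,
        {p : HilbertCube × HilbertCube × HilbertCube |
          ∃ x y z : M, ((x : HilbertCube), (y : HilbertCube), (z : HilbertCube)) ∈ R ∧
            p = ((h x : HilbertCube), (h y : HilbertCube), (h z : HilbertCube))} = S) ↔
    (∃ g : HilbertCube ≃ₜ HilbertCube,
        g '' (iotaHC '' M) = iotaHC '' N ∧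
        cube3 g '' (cube3 iotaHC '' R) = cube3 iotaHC '' S) :=
  homeo_iso_iff_ambient_homeo_general isEmbedding_iotaHC iotaHC_mem_pseudoInterior hM hRM
end

section
/- Let G and H be locally compact, non-compact Polish groups, let G* = G ∪ {∞_G} and H* = H ∪ {∞_H} be their one-point (Alexandrov) compactifications, and let R_G ⊆ (G*)³ be the closure in (G*)³ of the set {(g, f, gf) : g, f ∈ G}, and R_H ⊆ (H*)³ analogously. Then G and H are isomorphic as topological groups if and only if there exists a homeomorphism φ : G* → H* such that φ(∞_G) = ∞_H and (φ×φ×φ)[R_G] = R_H. -/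
open OnePoint

/-!
A homeomorphism of one-point compactifications that fixes `∞` is the extension of a homeomorphism
`e` of the underlying spaces. The multiplication graph is closed in `G × G × G`, so passing to its
closure in the compactification adds only triples with a coordinate `∞`. Hence the extension of `e`
matches the two closures exactly when `e` matches the two multiplication graphs, that is, when `e`
is multiplicative.
-/

open Topology

section HomeomorphFixingInfty

variable {X Y : Type*} [TopologicalSpace X] [TopologicalSpace Y]

theorem exists_continuous_coe_comp_eq {f : X → OnePoint Y} (hf : Continuous f)
    (hf_infty : ∀ x, f x ≠ ∞) : ∃ u : X → Y, Continuous u ∧ (↑) ∘ u = f := by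
  lift f to X → Y using hf_infty
  exact ⟨f, isOpenEmbedding_coe.continuous_iff.2 hf, rfl⟩

theorem exists_continuous_coe_eq_apply_coe {f : OnePoint X → OnePoint Y} (hf : Continuous f)
    (hf_inj : Function.Injective f) (hf_infty : f ∞ = ∞) :
    ∃ u : X → Y, Continuous u ∧ ∀ x : X, (u x : OnePoint Y) = f x := by
  have avoids_infty (x : X) : f x ≠ ∞ := hf_infty ▸ hf_inj.ne (coe_ne_infty x)
  obtain ⟨u, hu, hu_coe⟩ := exists_continuous_coe_comp_eq (hf.comp continuous_coe) avoids_infty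
  exact ⟨u, hu, congrFun hu_coe⟩

theorem exists_onePointCongr_eq (ψ : OnePoint X ≃ₜ OnePoint Y) (hψ : ψ ∞ = ∞) :
    ∃ e : X ≃ₜ Y, e.onePointCongr = ψ := by
  have hψ_symm : ψ.symm ∞ = ∞ := ψ.symm_apply_eq.2 hψ.symm
  obtain ⟨u, hu, hu_coe⟩ := exists_continuous_coe_eq_apply_coe ψ.continuous ψ.injective hψ
  obtain ⟨v, hv, hv_coe⟩ :=
    exists_continuous_coe_eq_apply_coe ψ.symm.continuous ψ.symm.injective hψ_symm
  let e : X ≃ₜ Y :=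
    { toFun := u
      invFun := v
      left_inv := fun x => coe_injective (by rw [hv_coe, hu_coe, ψ.symm_apply_apply])
      right_inv := fun y => coe_injective (by rw [hu_coe, hv_coe, ψ.apply_symm_apply]) }
  refine ⟨e, Homeomorph.ext fun x => ?_⟩
  induction x using OnePoint.rec with
  | infty => exact hψ.symm
  | coe x => exact hu_coe x

end HomeomorphFixingInfty

section Cube

variable {X Y : Type*} [TopologicalSpace X] [TopologicalSpace Y]

theorem isInducing_cube3 {f : X → Y} (hf : IsInducing f) : IsInducing (cube3 f) :=
  hf.prodMap (hf.prodMap hf)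

theorem image_cube3_closure (e : X ≃ₜ Y) (S : Set (X × X × X)) :
    cube3 e '' closure S = closure (cube3 e '' S) :=
  (e.prodCongr (e.prodCongr e)).image_closure S

end Cube

section MulGraph

/-- The multiplication table of `M` as a ternary relation on `M`. -/
def mulGraph (M : Type*) [Mul M] : Set (M × M × M) :=
  {p | p.1 * p.2.1 = p.2.2}

/-- The relation `R_M`: the closure of the multiplication table of `M` in the cube of the one-point
compactification. -/
def onePointMulGraph (M : Type*) [Mul M] [TopologicalSpace M] :
    Set (OnePoint M × OnePoint M × OnePoint M) :=
  closure {p | ∃ a b : M, p = ((a : OnePoint M), (b : OnePoint M), ((a * b : M) : OnePoint M))}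

variable {M N : Type*} [Mul M] [Mul N]

theorem image_cube3_mulGraph {F : Type*} [FunLike F M N] [MulHomClass F M N] {f : F}
    (hf : Function.Surjective f) : cube3 f '' mulGraph M = mulGraph N := by
  ext ⟨x, y, z⟩
  constructor
  · rintro ⟨⟨a, b, c⟩, hab : a * b = c, ⟨⟩⟩
    exact hab ▸ (map_mul f a b).symm
  · rintro (hxy : x * y = z)
    obtain ⟨a, rfl⟩ := hf x
    obtain ⟨b, rfl⟩ := hf y
    exact ⟨(a, b, a * b), rfl, by rw [← hxy, ← map_mul]; rfl⟩

variable [TopologicalSpace M] [TopologicalSpace N]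

theorem isClosed_mulGraph [ContinuousMul M] [T2Space M] : IsClosed (mulGraph M) :=
  isClosed_eq (by fun_prop) (by fun_prop)

theorem onePointMulGraph_eq_closure_image :
    onePointMulGraph M = closure (cube3 ((↑) : M → OnePoint M) '' mulGraph M) := by
  unfold onePointMulGraph
  congr 1
  ext p
  constructor
  · rintro ⟨a, b, rfl⟩
    exact ⟨(a, b, a * b), rfl, rfl⟩
  · rintro ⟨⟨a, b, c⟩, hab : a * b = c, rfl⟩
    exact ⟨a, b, hab ▸ rfl⟩

theorem coe_mem_onePointMulGraph_iff [ContinuousMul M] [T2Space M] {a b c : M} :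
    ((a : OnePoint M), (b : OnePoint M), (c : OnePoint M)) ∈ onePointMulGraph M ↔ a * b = c := by
  have trace_eq : cube3 (↑) ⁻¹' onePointMulGraph M = mulGraph M := by
    rw [onePointMulGraph_eq_closure_image,
      ← (isInducing_cube3 isOpenEmbedding_coe.isInducing).closure_eq_preimage_closure_image,
      isClosed_mulGraph.closure_eq]
  exact Set.ext_iff.1 trace_eq (a, b, c)

theorem image_onePointMulGraph (e : M ≃ₜ* N) :
    cube3 e.toHomeomorph.onePointCongr '' onePointMulGraph M = onePointMulGraph N := by
  have extends_e : cube3 e.toHomeomorph.onePointCongr ∘ cube3 ((↑) : M → OnePoint M) =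
      cube3 ((↑) : N → OnePoint N) ∘ cube3 e := rfl
  rw [onePointMulGraph_eq_closure_image, onePointMulGraph_eq_closure_image, image_cube3_closure,
    ← Set.image_comp, extends_e, Set.image_comp,
    image_cube3_mulGraph e.surjective]

theorem map_mul_of_image_onePointMulGraph_subset [ContinuousMul N] [T2Space N] (e : M ≃ₜ N)
    (h : cube3 e.onePointCongr '' onePointMulGraph M ⊆ onePointMulGraph N) (a b : M) :
    e (a * b) = e a * e b :=
  (coe_mem_onePointMulGraph_iff.1 (h ⟨_, subset_closure ⟨a, b, rfl⟩, rfl⟩)).symm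

end MulGraph

theorem lc_group_iso_iff_onePoint_structure_iso_general {M N : Type*}
    [Mul M] [TopologicalSpace M] [Mul N] [TopologicalSpace N] [ContinuousMul N] [T2Space N] :
    (∃ φ : M ≃* N, Continuous φ ∧ Continuous φ.symm) ↔
    ∃ ψ : OnePoint M ≃ₜ OnePoint N,
      ψ ∞ = ∞ ∧ cube3 ψ '' onePointMulGraph M = onePointMulGraph N := by
  constructor
  · rintro ⟨φ, hφ, hφ_symm⟩
    let e : M ≃ₜ* N := { φ with continuous_toFun := hφ, continuous_invFun := hφ_symm }
    exact ⟨e.toHomeomorph.onePointCongr, rfl, image_onePointMulGraph e⟩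
  · rintro ⟨ψ, hψ, h_image⟩
    obtain ⟨e, rfl⟩ := exists_onePointCongr_eq ψ hψ
    have e_mul := map_mul_of_image_onePointMulGraph_subset e h_image.subset
    exact ⟨{ e with map_mul' := e_mul }, e.continuous, e.symm.continuous⟩

/-- Two locally compact, non-compact Polish groups `G` and `H` are isomorphic as
topological groups iff there is a homeomorphism `φ` of their one-point
compactifications with `φ(∞) = ∞` mapping the closure of the multiplication graph
of `G` onto that of `H`. -/
theorem lc_group_iso_iff_onePoint_structure_iso
    {G H : Type*} [Group G] [TopologicalSpace G] [IsTopologicalGroup G] [PolishSpace G]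
    [LocallyCompactSpace G] [NoncompactSpace G]
    [Group H] [TopologicalSpace H] [IsTopologicalGroup H] [PolishSpace H]
    [LocallyCompactSpace H] [NoncompactSpace H] :
    (∃ φ : G ≃* H, Continuous φ ∧ Continuous φ.symm) ↔
    (∃ ψ : OnePoint G ≃ₜ OnePoint H,
      ψ ∞ = ∞ ∧
      cube3 ψ '' closure {p : OnePoint G × OnePoint G × OnePoint G |
          ∃ g f : G, p = ((g : OnePoint G), (f : OnePoint G), ((g * f : G) : OnePoint G))} =
        closure {p : OnePoint H × OnePoint H × OnePoint H |
          ∃ g f : H, p = ((g : OnePoint H), (f : OnePoint H), ((g * f : H) : OnePoint H))}) :=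
  lc_group_iso_iff_onePoint_structure_iso_general
end

section
/- Let 𝔾 be a Polish group, K a compact metrizable space, and e : 𝔾 → K a topological embedding whose image is dense and comeager in K. Let a, b ∈ 𝔾 be such that the subgroup generated by {a, b} is dense in 𝔾, and let R_a ⊆ K² be the closure of {(e(g), e(ga)) : g ∈ 𝔾} and R_b the closure of {(e(g), e(gb)) : g ∈ 𝔾}. Suppose ρ : K → K is a homeomorphism with (ρ×ρ)[R_a] = R_a and (ρ×ρ)[R_b] = R_b. Then there is g₀ ∈ 𝔾 with ρ(e(1)) = e(g₀) and ρ(e(g)) = e(g₀ g) for all g ∈ 𝔾; consequently, for all closed subsets A, B ⊆ 𝔾, if ρ[cl_K(e[A])] = cl_K(e[B]) then g₀A = B. -/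
/-- The coordinatewise action of a map on pairs. -/
def sq2 {A B : Type*} (f : A → B) : A × A → B × B := fun p => (f p.1, f p.2)

/-!
For points of `𝔾` the closure `R_a` still defines right multiplication by `a`, because `e` is an
embedding and the graph is closed in `𝔾²`. Hence, as long as `ρ` keeps a coset `g⟨a, b⟩` inside
`e(𝔾)`, it acts on that coset as a left translation: follow the edges of the Cayley graph. The
subgroup `⟨a, b⟩` is countable and right translations preserve comeagerness, so by Baire category
some coset `g⟨a, b⟩` does stay inside `e(𝔾)`; being dense, it determines `ρ ∘ e`.
-/

open Filter Set Topology

section Topology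

variable {X Y K L : Type*} [TopologicalSpace X] [TopologicalSpace Y] [TopologicalSpace K]
  [TopologicalSpace L]

theorem tendsto_residual_of_isInducing_of_denseRange {e : X → K} (he : IsInducing e)
    (hed : DenseRange e) : Tendsto e (residual X) (residual K) := by
  refine le_countableGenerate_iff_of_countableInterFilter.mpr ?_
  rintro U ⟨hUo, hUd⟩
  refine residual_of_dense_open (hUo.preimage he.continuous) (he.dense_iff.mpr fun x ↦ ?_)
  exact closure_minimal (hed.subset_closure_image_preimage_of_isOpen hUo) isClosed_closure
    (hUd (e x))

theorem image_eq_of_image_closure_eq {e : X → K} {f : Y → L} {ρ : K → L} {τ : X → Y}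
    (hf : IsInducing f) (hρ : Continuous ρ) (hτ : IsClosedMap τ)
    (hcomm : ∀ x, ρ (e x) = f (τ x)) {A : Set X} {B : Set Y} (hA : IsClosed A) (hB : IsClosed B)
    (hAB : ρ '' closure (e '' A) = closure (f '' B)) : τ '' A = B := by
  have himage : f '' (τ '' A) = ρ '' (e '' A) := by simp only [image_image, hcomm]
  have hclosure : closure (f '' (τ '' A)) = closure (f '' B) := by
    rw [himage, ← closure_image_closure hρ, hAB, closure_closure]
  rw [← (hτ A hA).closure_eq, ← hB.closure_eq, hf.closure_eq_preimage_closure_image, hclosure,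
    ← hf.closure_eq_preimage_closure_image]

end Topology

section Group

variable {G : Type*} [Group G]

theorem countable_subgroup_closure {S : Set G} (hS : S.Countable) :
    (Subgroup.closure S : Set G).Countable := by
  have := hS.to_subtype
  rw [FreeGroup.closure_eq_range, MonoidHom.coe_range]
  exact countable_range _

theorem apply_mul_eq_of_mem_closure {L : Type*} {φ f : G → L} {S : Set G}
    (hstep : ∀ s ∈ S, ∀ x k l, φ x = f k → φ (x * s) = f l → l = k * s) {g c : G}
    (hrange : ∀ w ∈ Subgroup.closure S, φ (g * w) ∈ range f) (hgc : φ g = f c) {w : G}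
    (hw : w ∈ Subgroup.closure S) : φ (g * w) = f (c * w) := by
  induction hw using Subgroup.closure_induction_right with
  | one => simpa only [mul_one] using hgc
  | mul_right x hx s hs ih =>
    obtain ⟨l, hl⟩ := hrange (x * s) (mul_mem hx (Subgroup.subset_closure hs))
    have hlc : l = c * x * s := hstep s hs (g * x) (c * x) l ih (by rw [mul_assoc, hl])
    rw [← hl, hlc, mul_assoc]
  | mul_inv_cancel x hx s hs ih =>
    obtain ⟨k, hk⟩ := hrange (x * s⁻¹) (mul_mem hx (inv_mem (Subgroup.subset_closure hs)))
    have hcancel : g * (x * s⁻¹) * s = g * x := by group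
    have hck : c * x = k * s :=
      hstep s hs (g * (x * s⁻¹)) k (c * x) hk.symm (by rw [hcancel, ih])
    rw [← hk, ← mul_assoc, hck, mul_inv_cancel_right]

end Group

section RightMulRel

variable {G K : Type*} [Mul G] [TopologicalSpace K]

/-- The relation `R_a` of the theorem: the closure in `K²` of the graph of right multiplication by
`a`, transported along `e : G → K`. -/
def rightMulRel (e : G → K) (a : G) : Set (K × K) :=
  closure {p | ∃ g, p = (e g, e (g * a))}

theorem mk_mem_rightMulRel (e : G → K) (a g : G) : (e g, e (g * a)) ∈ rightMulRel e a :=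
  subset_closure ⟨g, rfl⟩

theorem eq_mul_of_mk_mem_rightMulRel [TopologicalSpace G] [SeparatelyContinuousMul G] [T2Space G]
    {e : G → K} (he : IsInducing e) {a g h : G} (hgh : (e g, e h) ∈ rightMulRel e a) :
    h = g * a := by
  have hclosed : IsClosed {p : G × G | p.2 = p.1 * a} :=
    isClosed_eq continuous_snd ((continuous_mul_const a).comp continuous_fst)
  have hsub : {p : K × K | ∃ g, p = (e g, e (g * a))} ⊆
      Prod.map e e '' {p : G × G | p.2 = p.1 * a} := by
    rintro _ ⟨x, rfl⟩
    exact ⟨(x, x * a), rfl, rfl⟩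
  have hmem : (g, h) ∈ closure {p : G × G | p.2 = p.1 * a} := by
    rw [(he.prodMap he).closure_eq_preimage_closure_image]
    exact closure_mono hsub hgh
  exact hclosed.closure_subset hmem

end RightMulRel

section TopologicalGroup

variable {G K L : Type*} [Group G] [TopologicalSpace G] [SeparatelyContinuousMul G] [BaireSpace G]
  [TopologicalSpace K] [TopologicalSpace L]

theorem exists_forall_mul_mem_of_mem_residual {X C : Set G} (hX : X ∈ residual G)
    (hC : C.Countable) : ∃ g, ∀ w ∈ C, g * w ∈ X := by
  have hmem : ∀ᶠ g in residual G, ∀ w ∈ C, g * w ∈ X :=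
    (eventually_countable_ball hC).mpr fun w _ ↦
      tendsto_residual_of_isOpenMap (continuous_mul_const w) (isOpenMap_mul_right w) hX
  exact (dense_of_mem_residual hmem).nonempty

theorem exists_forall_apply_eq_apply_mul [T2Space L] {φ f : G → L} (hφ : Continuous φ)
    (hf : IsEmbedding f) (hφf : φ ⁻¹' range f ∈ residual G) {S : Set G} (hS : S.Countable)
    (hSd : Dense (Subgroup.closure S : Set G))
    (hφS : ∀ s ∈ S, ∀ g, (φ g, φ (g * s)) ∈ rightMulRel f s) :
    ∃ g₀, ∀ g, φ g = f (g₀ * g) := by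
  have : T2Space G := hf.t2Space
  have hstep (s) (hs : s ∈ S) (x k l : G) (hk : φ x = f k) (hl : φ (x * s) = f l) : l = k * s :=
    eq_mul_of_mk_mem_rightMulRel hf.isInducing (hk ▸ hl ▸ hφS s hs x)
  obtain ⟨g, hg⟩ := exists_forall_mul_mem_of_mem_residual hφf (countable_subgroup_closure hS)
  obtain ⟨c, hc⟩ := hg 1 (one_mem _)
  rw [mul_one] at hc
  have hcoset : (fun w ↦ φ (g * w)) = fun w ↦ f (c * w) :=
    Continuous.ext_on hSd (hφ.comp (continuous_const_mul g))
      (hf.continuous.comp (continuous_const_mul c))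
      fun _ hw ↦ apply_mul_eq_of_mem_closure hstep hg hc.symm hw
  refine ⟨c * g⁻¹, fun h ↦ ?_⟩
  simpa only [mul_inv_cancel_left, mul_assoc] using congrFun hcoset (g⁻¹ * h)

theorem rigidity_two_generated_general [T2Space L] {e : G → K} {f : G → L}
    (he : IsInducing e) (hed : DenseRange e) (hf : IsEmbedding f) (hfc : range f ∈ residual L)
    {S : Set G} (hS : S.Countable) (hSd : Dense (Subgroup.closure S : Set G))
    {ρ : K → L} (hρ : Continuous ρ) (hρo : IsOpenMap ρ)
    (hρS : ∀ s ∈ S, MapsTo (sq2 ρ) (rightMulRel e s) (rightMulRel f s)) :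
    ∃ g₀ : G, (∀ g, ρ (e g) = f (g₀ * g)) ∧ ∀ A B : Set G, IsClosed A → IsClosed B →
      ρ '' closure (e '' A) = closure (f '' B) → (fun x ↦ g₀ * x) '' A = B := by
  have hresidual : ρ ∘ e ⁻¹' range f ∈ residual G :=
    tendsto_residual_of_isInducing_of_denseRange he hed
      (tendsto_residual_of_isOpenMap hρ hρo hfc)
  obtain ⟨g₀, hg₀⟩ := exists_forall_apply_eq_apply_mul (hρ.comp he.continuous) hf hresidual hS hSd
    fun s hs g ↦ hρS s hs (mk_mem_rightMulRel e s g)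
  exact ⟨g₀, hg₀, fun A B ↦
    image_eq_of_image_closure_eq hf.isInducing hρ (isClosedMap_mul_left g₀) hg₀⟩

end TopologicalGroup

/-- Rigidity: let a Polish group `𝔾` be densely and comeagerly embedded in a compact
metrizable space `K`, let `a, b` topologically generate `𝔾`, and let `R_a`, `R_b` be the
closures in `K²` of the graphs of right multiplication by `a`, `b`. Any homeomorphism
`ρ` of `K` preserving `R_a` and `R_b` is the extension of a left translation of `𝔾`;
consequently it relates closures of closed subsets `A, B ⊆ 𝔾` iff `g₀A = B`. -/
theorem rigidity_two_generated
    {𝔾 K : Type*} [Group 𝔾] [TopologicalSpace 𝔾] [IsTopologicalGroup 𝔾] [PolishSpace 𝔾]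
    [TopologicalSpace K] [CompactSpace K] [TopologicalSpace.MetrizableSpace K]
    (e : 𝔾 → K) (he : Topology.IsEmbedding e) (hed : Dense (Set.range e))
    (hec : Set.range e ∈ residual K)
    (a b : 𝔾) (hab : Dense ((Subgroup.closure {a, b} : Subgroup 𝔾) : Set 𝔾))
    (ρ : K ≃ₜ K)
    (hρa : sq2 ρ '' closure {p : K × K | ∃ g : 𝔾, p = (e g, e (g * a))} =
      closure {p : K × K | ∃ g : 𝔾, p = (e g, e (g * a))})
    (hρb : sq2 ρ '' closure {p : K × K | ∃ g : 𝔾, p = (e g, e (g * b))} =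
      closure {p : K × K | ∃ g : 𝔾, p = (e g, e (g * b))}) :
    ∃ g₀ : 𝔾, ρ (e 1) = e g₀ ∧ (∀ g : 𝔾, ρ (e g) = e (g₀ * g)) ∧
      ∀ A B : Set 𝔾, IsClosed A → IsClosed B →
        ρ '' closure (e '' A) = closure (e '' B) → (fun x => g₀ * x) '' A = B := by
  obtain ⟨g₀, hg₀, hclosed⟩ := rigidity_two_generated_general he.isInducing hed he hec
    (toFinite {a, b}).countable hab ρ.continuous ρ.isOpenMap (by
      rintro s (rfl | rfl)
      exacts [mapsTo_iff_image_subset.mpr hρa.subset, mapsTo_iff_image_subset.mpr hρb.subset])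
  exact ⟨g₀, by simpa only [mul_one] using hg₀ 1, hg₀, hclosed⟩
end

section
/- Let X and Y be nonempty compact metric spaces equipped, for each k ≥ 1, with closed relations R_k ⊆ X^k and S_k ⊆ Y^k. For n ≥ 1 and a tuple ζ = (S'_1,…,S'_n) with S'_k ⊆ {1,…,n}^k, let C_ζ(X) be the set of n×n real matrices [d(x_i,x_j)]_{i,j≤n} over all tuples (x_1,…,x_n) ∈ X^n such that (x_{s(1)},…,x_{s(k)}) ∈ R_k for all k ≤ n and all s ∈ S'_k; define C_ζ(Y) analogously using the relations S_k. Then there exists a surjective isometry φ : X → Y with φ^k[R_k] = S_k for all k ≥ 1 if and only if C_ζ(X) = C_ζ(Y) for every n and every such tuple ζ. -/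
/-- For a compact metric structure `(X, (R_k))`, `n`, and a tuple `ζ` of constraint
sets `S'_k ⊆ {1,…,n}^k` (`1 ≤ k ≤ n`), the set `C_ζ(X)` of distance matrices
`[d(x_i,x_j)]` of tuples `(x_1,…,x_n) ∈ X^n` satisfying the constraints. -/
def distMatrices {X : Type*} [MetricSpace X] (R : ∀ k : ℕ, Set (Fin k → X)) (n : ℕ)
    (S' : ∀ k : ℕ, Set (Fin k → Fin n)) : Set (Fin n → Fin n → ℝ) :=
  {A | ∃ x : Fin n → X, (∀ i j, A i j = dist (x i) (x j)) ∧
    ∀ k, 1 ≤ k → k ≤ n → ∀ s ∈ S' k, (fun i => x (s i)) ∈ R k}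

/-!
The points of a finite tuple of `X` satisfy a largest constraint tuple `ζ`, and `C_ζ(X) ⊆ C_ζ(Y)`
says that they can be copied into `Y`, preserving distances and the relations among them. By
compactness of `Y^X` the copies can be chosen as the values of a single relation-preserving
isometric embedding `f : X → Y`; by symmetry there is also `g : Y → X`. An isometric embedding of a
compact metric space into itself is onto, because every point is recurrent. Applied to `g ∘ f` on
`X`, and coordinatewise on each compact `R_k`, this shows that `f` maps `X` onto `Y` and `R_k` onto
`S_k`.
-/

open Set Function

section Isometry

variable {X Y : Type*} [EMetricSpace X] [EMetricSpace Y]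

theorem surjOn_of_isometry_of_mapsTo {f : X → X} (hf : Isometry f) {K : Set X}
    (hK : IsCompact K) (hfK : MapsTo f K K) : SurjOn f K K := by
  intro x hx
  have hiter (m : ℕ) : Isometry f^[m] := by
    induction m with
    | zero => exact isometry_id
    | succ m ih => exact ih.comp hf
  have horbit (m : ℕ) : f^[m] x ∈ K := hfK.iterate m hx
  suffices hcl : x ∈ closure (f '' K) by
    rwa [(hK.image hf.continuous).isClosed.closure_eq] at hcl
  refine EMetric.mem_closure_iff.2 fun ε hε => ?_
  obtain ⟨a, -, φ, hφ, hlim⟩ := hK.tendsto_subseq horbit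
  obtain ⟨N, hN⟩ := EMetric.cauchySeq_iff.1 hlim.cauchySeq ε hε
  obtain ⟨d, hd⟩ := Nat.exists_eq_add_of_lt (hφ N.lt_succ_self)
  refine ⟨f^[d + 1] x, ⟨f^[d] x, horbit d, (iterate_succ_apply' f d x).symm⟩, ?_⟩
  calc edist x (f^[d + 1] x)
      = edist (f^[φ N] x) (f^[φ N] (f^[d + 1] x)) := ((hiter _).edist_eq _ _).symm
    _ = edist (f^[φ N] x) (f^[φ (N + 1)] x) := by rw [← iterate_add_apply, hd, add_assoc]
    _ < ε := hN N le_rfl (N + 1) N.le_succ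

theorem image_eq_of_isometry_of_mapsTo {f : X → Y} {g : Y → X} (hf : Isometry f) (hg : Isometry g)
    {K : Set X} {L : Set Y} (hK : IsCompact K) (hfK : MapsTo f K L) (hgL : MapsTo g L K) :
    f '' K = L := by
  refine hfK.image_subset.antisymm fun y hy => ?_
  obtain ⟨x, hx, hxy⟩ :=
    surjOn_of_isometry_of_mapsTo (hg.comp hf) hK (hgL.comp hfK) (hgL hy)
  exact ⟨x, hx, hg.injective hxy⟩

end Isometry

/-- An isometric embedding between metric structures `(X, (R_k))` and `(Y, (S_k))` that preserves
all relations; as in `distMatrices`, the relation of arity `0` is ignored. -/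
structure IsRelEmbedding {X Y : Type*} [PseudoEMetricSpace X] [PseudoEMetricSpace Y]
    (R : ∀ k : ℕ, Set (Fin k → X)) (S : ∀ k : ℕ, Set (Fin k → Y)) (f : X → Y) : Prop where
  isometry : Isometry f
  mapsTo : ∀ k, 1 ≤ k → MapsTo (f ∘ ·) (R k) (S k)

/-- The largest constraint tuple `ζ` satisfied by the points `x`. -/
def constraintsOf {X : Type*} {n : ℕ} (R : ∀ k : ℕ, Set (Fin k → X)) (x : Fin n → X) (k : ℕ) :
    Set (Fin k → Fin n) :=
  {s | x ∘ s ∈ R k}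

/-- The maps that behave on the points `x` like a relation-preserving isometric embedding. The
arity is bounded by the number of points, as in `distMatrices`. -/
def embeddingsOn {X Y : Type*} [Dist X] [Dist Y] (R : ∀ k : ℕ, Set (Fin k → X))
    (S : ∀ k : ℕ, Set (Fin k → Y)) {n : ℕ} (x : Fin n → X) : Set (X → Y) :=
  {f | (∀ i j, dist (f (x i)) (f (x j)) = dist (x i) (x j)) ∧
    ∀ k, 1 ≤ k → k ≤ n → ∀ s ∈ constraintsOf R x k, f ∘ x ∘ s ∈ S k}

section EmbeddingsOn

variable {X Y : Type*} {R : ∀ k : ℕ, Set (Fin k → X)} {S : ∀ k : ℕ, Set (Fin k → Y)}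

theorem isClosed_embeddingsOn [Dist X] [PseudoMetricSpace Y]
    (hS : ∀ k, 1 ≤ k → IsClosed (S k)) {n : ℕ} (x : Fin n → X) :
    IsClosed (embeddingsOn R S x) := by
  simp only [embeddingsOn, ofPred_and, ofPred_forall]
  refine IsClosed.inter ?_ ?_
  · exact isClosed_iInter fun i => isClosed_iInter fun j =>
      isClosed_eq (by fun_prop) continuous_const
  · exact isClosed_iInter fun k => isClosed_iInter fun hk => isClosed_iInter fun _ =>
      isClosed_iInter fun s => isClosed_iInter fun _ =>
        (hS k hk).preimage (continuous_pi fun i => continuous_apply (x (s i)))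

theorem embeddingsOn_subset_comp [Dist X] [Dist Y] {m n : ℕ} (hmn : m ≤ n) (x : Fin n → X)
    (ι : Fin m → Fin n) : embeddingsOn R S x ⊆ embeddingsOn R S (x ∘ ι) :=
  fun _ hf => ⟨fun i j => hf.1 (ι i) (ι j),
    fun k hk hkm s hs => hf.2 k hk (hkm.trans hmn) (ι ∘ s) hs⟩

theorem directed_embeddingsOn [Dist X] [Dist Y] :
    Directed (· ⊇ ·) fun x : Σ n, Fin n → X => (embeddingsOn R S x.2 : Set (X → Y)) := by
  rintro ⟨m, x⟩ ⟨n, y⟩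
  refine ⟨⟨m + n, Fin.append x y⟩, ?_, ?_⟩
  · simpa only [comp_def, Fin.append_left] using
      embeddingsOn_subset_comp (m.le_add_right n) (Fin.append x y) (Fin.castAdd n)
  · simpa only [comp_def, Fin.append_right] using
      embeddingsOn_subset_comp (n.le_add_left m) (Fin.append x y) (Fin.natAdd m)

theorem isRelEmbedding_of_forall_mem_embeddingsOn [PseudoMetricSpace X] [PseudoMetricSpace Y]
    {f : X → Y} (hf : ∀ (n : ℕ) (x : Fin n → X), f ∈ embeddingsOn R S x) :
    IsRelEmbedding R S f where
  isometry := Isometry.of_dist_eq fun a b => (hf 2 ![a, b]).1 0 1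
  mapsTo k hk r hr := (hf k r).2 k hk le_rfl id hr

end EmbeddingsOn

section MetricStructure

variable {X Y : Type*} [MetricSpace X] [MetricSpace Y] {R : ∀ k : ℕ, Set (Fin k → X)}
  {S : ∀ k : ℕ, Set (Fin k → Y)}

theorem IsRelEmbedding.distMatrices_subset {f : X → Y} (hf : IsRelEmbedding R S f) (n : ℕ)
    (S' : ∀ k : ℕ, Set (Fin k → Fin n)) : distMatrices R n S' ⊆ distMatrices S n S' := by
  rintro A ⟨x, hA, hx⟩
  exact ⟨f ∘ x, fun i j => (hA i j).trans (hf.isometry.dist_eq _ _).symm,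
    fun k hk hkn s hs => hf.mapsTo k hk (hx k hk hkn s hs)⟩

theorem distMatrices_zero (S' : ∀ k : ℕ, Set (Fin k → Fin 0)) : distMatrices R 0 S' = univ :=
  eq_univ_of_forall fun _ => ⟨Fin.elim0, fun i => i.elim0, fun _ hk hk0 => by omega⟩

theorem embeddingsOn_nonempty [Nonempty Y] {n : ℕ} (x : Fin n → X)
    (h : distMatrices R n (constraintsOf R x) ⊆ distMatrices S n (constraintsOf R x)) :
    (embeddingsOn R S x).Nonempty := by
  obtain ⟨y, hdist, hrel⟩ : (fun i j => dist (x i) (x j)) ∈ distMatrices S n (constraintsOf R x) :=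
    h ⟨x, fun _ _ => rfl, fun _ _ _ _ hs => hs⟩
  have hyx : y.FactorsThrough x := fun i j hij =>
    dist_eq_zero.1 ((hdist i j).symm.trans (dist_eq_zero.2 hij))
  obtain ⟨f, rfl⟩ : ∃ f : X → Y, y = f ∘ x := (factorsThrough_iff y).1 hyx
  exact ⟨f, fun i j => (hdist i j).symm, hrel⟩

theorem exists_isRelEmbedding [CompactSpace Y] [Nonempty Y] (hS : ∀ k, 1 ≤ k → IsClosed (S k))
    (h : ∀ n (S' : ∀ k : ℕ, Set (Fin k → Fin n)), distMatrices R n S' ⊆ distMatrices S n S') :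
    ∃ f : X → Y, IsRelEmbedding R S f := by
  have hclosed (x : Σ n, Fin n → X) : IsClosed (embeddingsOn R S x.2) :=
    isClosed_embeddingsOn hS x.2
  have : Nonempty (Σ n, Fin n → X) := ⟨⟨0, Fin.elim0⟩⟩
  obtain ⟨f, hf⟩ := IsCompact.nonempty_iInter_of_directed_nonempty_isCompact_isClosed _
    directed_embeddingsOn (fun x => embeddingsOn_nonempty x.2 (h x.1 _))
    (fun x => (hclosed x).isCompact) hclosed
  exact ⟨f, isRelEmbedding_of_forall_mem_embeddingsOn fun n x => mem_iInter.1 hf ⟨n, x⟩⟩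

theorem IsRelEmbedding.exists_isometryEquiv [CompactSpace X] {f : X → Y} {g : Y → X}
    (hf : IsRelEmbedding R S f) (hg : IsRelEmbedding S R g) (hR : ∀ k, 1 ≤ k → IsClosed (R k)) :
    ∃ φ : X ≃ᵢ Y, ∀ k, 1 ≤ k → (φ ∘ ·) '' R k = S k := by
  have hsurj : Surjective f := range_eq_univ.1 <| image_univ.symm.trans <|
    image_eq_of_isometry_of_mapsTo hf.isometry hg.isometry isCompact_univ
      (mapsTo_univ f univ) (mapsTo_univ g univ)
  refine ⟨⟨Equiv.ofBijective f ⟨hf.isometry.injective, hsurj⟩, hf.isometry⟩, fun k hk => ?_⟩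
  exact image_eq_of_isometry_of_mapsTo (Isometry.piMap _ fun _ => hf.isometry)
    (Isometry.piMap _ fun _ => hg.isometry) (hR k hk).isCompact (hf.mapsTo k hk) (hg.mapsTo k hk)

theorem isRelEmbedding_of_image_eq (φ : X ≃ᵢ Y) (hφ : ∀ k, 1 ≤ k → (φ ∘ ·) '' R k = S k) :
    IsRelEmbedding R S φ where
  isometry := φ.isometry
  mapsTo k hk := mapsTo_iff_image_subset.2 (hφ k hk).subset

theorem isRelEmbedding_symm_of_image_eq (φ : X ≃ᵢ Y) (hφ : ∀ k, 1 ≤ k → (φ ∘ ·) '' R k = S k) :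
    IsRelEmbedding S R φ.symm where
  isometry := φ.symm.isometry
  mapsTo k hk := by
    rw [← hφ k hk]
    rintro _ ⟨r, hr, rfl⟩
    simpa only [← comp_assoc, IsometryEquiv.symm_comp_self, id_comp] using hr

end MetricStructure

/-- Gromov-type criterion: two nonempty compact metric structures are isometrically
isomorphic iff they have the same constrained distance matrices `C_ζ` for every `n ≥ 1`
and every tuple `ζ` of constraint sets. -/
theorem isometric_iso_iff_distMatrices_eq
    {X Y : Type*} [MetricSpace X] [CompactSpace X] [Nonempty X]
    [MetricSpace Y] [CompactSpace Y] [Nonempty Y]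
    (R : ∀ k : ℕ, Set (Fin k → X)) (S : ∀ k : ℕ, Set (Fin k → Y))
    (hR : ∀ k, 1 ≤ k → IsClosed (R k)) (hS : ∀ k, 1 ≤ k → IsClosed (S k)) :
    (∃ φ : X ≃ᵢ Y, ∀ k, 1 ≤ k → (fun x : Fin k → X => (φ : X → Y) ∘ x) '' R k = S k) ↔
    (∀ n, 1 ≤ n → ∀ S' : ∀ k : ℕ, Set (Fin k → Fin n),
      distMatrices R n S' = distMatrices S n S') := by
  constructor
  · rintro ⟨φ, hφ⟩ n - S'
    exact ((isRelEmbedding_of_image_eq φ hφ).distMatrices_subset n S').antisymm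
      ((isRelEmbedding_symm_of_image_eq φ hφ).distMatrices_subset n S')
  · intro h
    have heq : ∀ n (S' : ∀ k : ℕ, Set (Fin k → Fin n)), distMatrices R n S' = distMatrices S n S'
      | 0, S' => by rw [distMatrices_zero, distMatrices_zero]
      | n + 1, S' => h (n + 1) n.succ_pos S'
    obtain ⟨f, hf⟩ := exists_isRelEmbedding hS fun n S' => (heq n S').subset
    obtain ⟨g, hg⟩ := exists_isRelEmbedding hR fun n S' => (heq n S').superset
    exact hf.exists_isometryEquiv hg hR
end

section
/- Let X and Y be compact metric spaces equipped, for each k ≥ 1, with closed relations R_k ⊆ X^k and S_k ⊆ Y^k. Suppose f : X → Y and g : Y → X are isometric embeddings such that f^k[R_k] ⊆ S_k and g^k[S_k] ⊆ R_k for every k ≥ 1. Then f is surjective and f^k[R_k] = S_k for all k ≥ 1; in particular, f is an isometric isomorphism of the structures. -/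
/-!
A distance-nondecreasing self-map `h` of a totally bounded set is recurrent: infinitely many points
of an orbit are close together, and if `h^[m] z` and `h^[n] z` are close, with `m` much smaller than
`n`, then so are `z` and `h^[n - m] z`. Recurrence of pairs forces `h` to preserve distances, and
recurrence of points forces its image to be dense, hence everything if the set is compact. Applied
to `f ∘ g` on `Y` and, coordinatewise, on each `S k`, this leaves no point of `Y` and no tuple of
`S k` outside the image of `f`.
-/

open Filter Function Set Topology
open scoped NNReal

section Antilipschitz

variable {X Y X' Y' : Type*} [PseudoEMetricSpace X] [PseudoEMetricSpace Y]
  [PseudoEMetricSpace X'] [PseudoEMetricSpace Y'] {C C' : ℝ≥0}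

theorem antilipschitzWith_iterate {h : X → X} (hh : AntilipschitzWith C h) (n : ℕ) :
    AntilipschitzWith (C ^ n) h^[n] := by
  induction n with
  | zero => simpa using AntilipschitzWith.id
  | succ n ih => simpa only [iterate_succ, pow_succ'] using ih.comp hh

theorem antilipschitzWith_prodMap {f : X → Y} {g : X' → Y'} (hf : AntilipschitzWith C f)
    (hg : AntilipschitzWith C' g) : AntilipschitzWith (max C C') (Prod.map f g) := fun p q ↦
  max_le ((hf p.1 q.1).trans (by gcongr <;> exact le_max_left _ _))
    ((hg p.2 q.2).trans (by gcongr <;> exact le_max_right _ _))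

theorem antilipschitzWith_piMap {ι : Type*} [Fintype ι] {α β : ι → Type*}
    [∀ i, PseudoEMetricSpace (α i)] [∀ i, PseudoEMetricSpace (β i)] {f : ∀ i, α i → β i}
    (hf : ∀ i, AntilipschitzWith C (f i)) : AntilipschitzWith C (Pi.map f) := fun x y ↦
  edist_pi_le_iff.2 fun i ↦ (hf i (x i) (y i)).trans <| by
    gcongr
    exact edist_le_pi_edist (Pi.map f x) (Pi.map f y) i

end Antilipschitz

theorem totallyBounded_prod {α β : Type*} [UniformSpace α] [UniformSpace β] {s : Set α} {t : Set β}
    (hs : TotallyBounded s) (ht : TotallyBounded t) : TotallyBounded (s ×ˢ t) := by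
  rw [totallyBounded_iff_ultrafilter] at hs ht ⊢
  intro u hu
  have hu' : ∀ᶠ p in (u : Filter (α × β)), p.1 ∈ s ∧ p.2 ∈ t := le_principal_iff.1 hu
  have hfst : Cauchy (map Prod.fst (u : Filter (α × β))) :=
    hs (u.map Prod.fst) (tendsto_principal.2 (hu'.mono fun _ hp ↦ hp.1))
  have hsnd : Cauchy (map Prod.snd (u : Filter (α × β))) :=
    ht (u.map Prod.snd) (tendsto_principal.2 (hu'.mono fun _ hp ↦ hp.2))
  exact (hfst.prod hsnd).mono (tendsto_map.prodMk tendsto_map)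

section SelfMap

variable {Z : Type*} {K : Set Z} {h : Z → Z}

theorem mapClusterPt_iterate_of_antilipschitzWith_one [PseudoEMetricSpace Z] (hK : TotallyBounded K)
    (hh : AntilipschitzWith 1 h) (hm : MapsTo h K K) {z : Z} (hz : z ∈ K) :
    MapClusterPt z atTop (fun n ↦ h^[n] z) := by
  have hcauchy : Cauchy (map (fun n ↦ h^[n] z) (hyperfilter ℕ : Filter ℕ)) :=
    ((hyperfilter ℕ).map fun n ↦ h^[n] z).cauchy_of_totallyBounded hK
      (tendsto_principal.2 (Eventually.of_forall fun n ↦ hm.iterate n hz))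
  refine Metric.nhds_basis_eball.mapClusterPt_iff_frequently.2 fun ε hε ↦ ?_
  obtain ⟨t, ht, hclose⟩ := (EMetric.cauchy_iff.1 hcauchy).2 ε hε
  have hfreq : ∃ᶠ n in atTop, h^[n] z ∈ t :=
    Frequently.filter_mono (Eventually.frequently (mem_map.1 ht)) Nat.hyperfilter_le_atTop
  obtain ⟨m, hmt⟩ := hfreq.exists
  refine frequently_atTop.2 fun N ↦ ?_
  obtain ⟨n, hn, hnt⟩ := frequently_atTop.1 hfreq (m + N)
  refine ⟨n - m, by lia, ?_⟩
  calc edist (h^[n - m] z) z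
      ≤ edist (h^[m] (h^[n - m] z)) (h^[m] z) := by
        simpa using antilipschitzWith_iterate hh m (h^[n - m] z) z
    _ = edist (h^[n] z) (h^[m] z) := by
        rw [← iterate_add_apply, Nat.add_sub_cancel' (by lia)]
    _ < ε := hclose _ hnt _ hmt

theorem edist_map_eq_of_antilipschitzWith_one [PseudoEMetricSpace Z] (hK : TotallyBounded K)
    (hh : AntilipschitzWith 1 h) (hm : MapsTo h K K) {x y : Z} (hx : x ∈ K) (hy : y ∈ K) :
    edist (h x) (h y) = edist x y := by
  refine le_antisymm ?_ (by simpa using hh x y)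
  have hrec : MapClusterPt (x, y) atTop fun n ↦ (Prod.map h h)^[n] (x, y) :=
    mapClusterPt_iterate_of_antilipschitzWith_one (totallyBounded_prod hK hK)
      (max_self (1 : ℝ≥0) ▸ antilipschitzWith_prodMap hh hh) (hm.prodMap hm) ⟨hx, hy⟩
  have hdist : MapClusterPt (edist x y) atTop fun n ↦ edist (h^[n] x) (h^[n] y) := by
    simpa only [comp_def, Prod.map_iterate, Prod.map_apply] using
      hrec.continuousAt_comp (f := fun p ↦ edist p.1 p.2) (by fun_prop)
  refine isClosed_Ici.mem_of_mapClusterPt hdist ((eventually_ge_atTop 1).mono fun n hn ↦ ?_)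
  obtain ⟨n, rfl⟩ := Nat.exists_eq_add_of_le' hn
  simpa using antilipschitzWith_iterate hh n (h x) (h y)

theorem surjOn_of_antilipschitzWith_one [EMetricSpace Z] (hK : IsCompact K)
    (hh : AntilipschitzWith 1 h) (hm : MapsTo h K K) : SurjOn h K K := by
  have hcont : ContinuousOn h K := LipschitzOnWith.continuousOn (K := 1) fun x hx y hy ↦ by
    simp [edist_map_eq_of_antilipschitzWith_one hK.totallyBounded hh hm hx hy]
  intro z hz
  refine (hK.image_of_continuousOn hcont).isClosed.mem_of_mapClusterPt
    (mapClusterPt_iterate_of_antilipschitzWith_one hK.totallyBounded hh hm hz)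
    ((eventually_ge_atTop 1).mono fun n hn ↦ ?_)
  obtain ⟨n, rfl⟩ := Nat.exists_eq_add_of_le' hn
  exact ⟨h^[n] z, hm.iterate n hz, (iterate_succ_apply' h n z).symm⟩

end SelfMap

section Pair

variable {X Y : Type*} [PseudoEMetricSpace X] [EMetricSpace Y] {f : X → Y} {g : Y → X}

theorem image_eq_of_antilipschitzWith_one {A : Set X} {B : Set Y} (hB : IsCompact B)
    (hf : AntilipschitzWith 1 f) (hg : AntilipschitzWith 1 g) (hfm : MapsTo f A B)
    (hgm : MapsTo g B A) : f '' A = B := by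
  refine hfm.image_subset.antisymm fun y hy ↦ ?_
  obtain ⟨z, hz, rfl⟩ :=
    surjOn_of_antilipschitzWith_one hB (by simpa using hf.comp hg) (hfm.comp hgm) hy
  exact ⟨g z, hgm hz, rfl⟩

variable [CompactSpace Y]

theorem surjective_of_antilipschitzWith_one (hf : AntilipschitzWith 1 f)
    (hg : AntilipschitzWith 1 g) : Surjective f :=
  range_eq_univ.1 <| image_univ.symm.trans <|
    image_eq_of_antilipschitzWith_one isCompact_univ hf hg (mapsTo_univ _ _) (mapsTo_univ _ _)

theorem isometry_of_antilipschitzWith_one (hf : AntilipschitzWith 1 f)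
    (hg : AntilipschitzWith 1 g) : Isometry f := by
  have hfg : AntilipschitzWith 1 (f ∘ g) := by simpa using hf.comp hg
  have hsurj : SurjOn (f ∘ g) univ univ :=
    surjOn_of_antilipschitzWith_one isCompact_univ hfg (mapsTo_univ _ _)
  have hfiber {x x' : X} (h : f x = f x') : edist x x' = 0 := by simpa [h] using hf x x'
  refine fun x x' ↦ le_antisymm ?_ (by simpa using hf x x')
  obtain ⟨y, -, hy⟩ := hsurj (mem_univ (f x))
  obtain ⟨y', -, hy'⟩ := hsurj (mem_univ (f x'))
  calc edist (f x) (f x')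
      = edist ((f ∘ g) y) ((f ∘ g) y') := by rw [hy, hy']
    _ = edist y y' :=
        edist_map_eq_of_antilipschitzWith_one isCompact_univ.totallyBounded hfg (mapsTo_univ _ _)
          (mem_univ y) (mem_univ y')
    _ ≤ edist (g y) (g y') := by simpa using hg y y'
    _ = edist x x' := edist_congr (hfiber hy) (hfiber hy')

end Pair

theorem isometric_embeddings_give_iso_general
    {X Y : Type*} [PseudoEMetricSpace X] [EMetricSpace Y] [CompactSpace Y]
    {I : Type*} {ι : I → Type*} [∀ i, Finite (ι i)]
    (R : ∀ i, Set (ι i → X)) (S : ∀ i, Set (ι i → Y)) (hS : ∀ i, IsClosed (S i))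
    (f : X → Y) (hf : AntilipschitzWith 1 f) (g : Y → X) (hg : AntilipschitzWith 1 g)
    (hfR : ∀ i, (fun x : ι i → X ↦ f ∘ x) '' R i ⊆ S i)
    (hgS : ∀ i, (fun y : ι i → Y ↦ g ∘ y) '' S i ⊆ R i) :
    Isometry f ∧ Surjective f ∧ ∀ i, (fun x : ι i → X ↦ f ∘ x) '' R i = S i := by
  refine ⟨isometry_of_antilipschitzWith_one hf hg, surjective_of_antilipschitzWith_one hf hg,
    fun i ↦ ?_⟩
  have := Fintype.ofFinite (ι i)
  exact image_eq_of_antilipschitzWith_one (hS i).isCompact (antilipschitzWith_piMap fun _ ↦ hf)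
    (antilipschitzWith_piMap fun _ ↦ hg) (mapsTo_iff_image_subset.2 (hfR i))
    (mapsTo_iff_image_subset.2 (hgS i))

/-- If `f : X → Y` and `g : Y → X` are isometric embeddings of compact metric
structures with `f^k[R_k] ⊆ S_k` and `g^k[S_k] ⊆ R_k` for all `k ≥ 1`, then `f` is
surjective and `f^k[R_k] = S_k` for all `k ≥ 1`, i.e., `f` is an isometric
isomorphism of the structures. -/
theorem isometric_embeddings_give_iso
    {X Y : Type*} [MetricSpace X] [CompactSpace X] [MetricSpace Y] [CompactSpace Y]
    (R : ∀ k : ℕ, Set (Fin k → X)) (S : ∀ k : ℕ, Set (Fin k → Y))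
    (hR : ∀ k, 1 ≤ k → IsClosed (R k)) (hS : ∀ k, 1 ≤ k → IsClosed (S k))
    (f : X → Y) (hf : Isometry f) (g : Y → X) (hg : Isometry g)
    (hfR : ∀ k, 1 ≤ k → (fun x : Fin k → X => f ∘ x) '' R k ⊆ S k)
    (hgS : ∀ k, 1 ≤ k → (fun y : Fin k → Y => g ∘ y) '' S k ⊆ R k) :
    Function.Surjective f ∧ ∀ k, 1 ≤ k → (fun x : Fin k → X => f ∘ x) '' R k = S k := by
  have h := isometric_embeddings_give_iso_general (I := {k // 1 ≤ k}) (fun k ↦ R k) (fun k ↦ S k)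
    (fun k ↦ hS k k.2) f hf.antilipschitz g hg.antilipschitz (fun k ↦ hfR k k.2) fun k ↦ hgS k k.2
  exact ⟨h.2.1, fun k hk ↦ h.2.2 ⟨k, hk⟩⟩
end

section
/- Let M and N be totally disconnected compact metrizable spaces and, for each k ≥ 1, let R_k ⊆ M^k and S_k ⊆ N^k be closed. Then there exists a homeomorphism f : M → N with f^k[R_k] = S_k for all k ≥ 1 if and only if there exists an isomorphism Φ from the Boolean algebra of clopen subsets of M to the Boolean algebra of clopen subsets of N such that for every k ≥ 1 and all clopen sets a_1,…,a_k ⊆ M: R_k ∩ (a_1 × ⋯ × a_k) = ∅ if and only if S_k ∩ (Φ(a_1) × ⋯ × Φ(a_k)) = ∅. -/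
open TopologicalSpace

/-!
This is Stone duality with relations added. A point `y` of `Y` picks out the clopen sets of `X`
whose image under a Boolean homomorphism contains `y`; by compactness of `X` these are exactly the
clopen neighbourhoods of some point of `X`, so every isomorphism of clopen algebras comes from a
homeomorphism. A closed relation is in turn determined by the clopen boxes it misses, because every
neighbourhood of a point of a product of zero-dimensional spaces contains a clopen box around it.
-/

section Duality

variable {X Y : Type*} [TopologicalSpace X] [TopologicalSpace Y]

/-- The isomorphism of clopen algebras induced by a homeomorphism, sending a clopen set to its
image. The image is encoded as the preimage under the inverse. -/
def clopensCongr (f : X ≃ₜ Y) : Clopens X ≃o Clopens Y where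
  toFun a := ⟨f.symm ⁻¹' a, a.isClopen.preimage f.symm.continuous⟩
  invFun b := ⟨f ⁻¹' b, b.isClopen.preimage f.continuous⟩
  left_inv a := by ext; simp
  right_inv b := by ext; simp
  map_rel_iff' := f.symm.surjective.preimage_subset_preimage_iff

theorem mem_clopensCongr {f : X ≃ₜ Y} {a : Clopens X} {y : Y} :
    y ∈ clopensCongr f a ↔ f.symm y ∈ a :=
  Iff.rfl

theorem eq_of_forall_mem_clopens [TotallySeparatedSpace X] {x y : X}
    (h : ∀ a : Clopens X, x ∈ a → y ∈ a) : x = y := by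
  by_contra hne
  obtain ⟨U, hU, hxU, hyU⟩ := exists_isClopen_of_totally_separated hne
  exact hyU (h ⟨U, hU⟩ hxU)

theorem exists_forall_mem_iff_mem_map [CompactSpace X] {F : Type*}
    [FunLike F (Clopens X) (Clopens Y)] [BoundedLatticeHomClass F (Clopens X) (Clopens Y)]
    (Φ : F) (y : Y) : ∃ x : X, ∀ a : Clopens X, x ∈ a ↔ y ∈ Φ a := by
  by_contra! h
  have separated (x : X) : ∃ a : Clopens X, x ∈ a ∧ y ∉ Φ a := by
    obtain ⟨a, ⟨hxa, hya⟩ | ⟨hxa, hya⟩⟩ := h x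
    · exact ⟨a, hxa, hya⟩
    · refine ⟨aᶜ, hxa, ?_⟩
      rw [map_compl']
      exact not_not_intro hya
  choose a hxa hya using separated
  obtain ⟨t, ht⟩ := CompactSpace.elim_nhds_subcover (fun x ↦ (a x : Set X))
    fun x ↦ (a x).isOpen.mem_nhds (hxa x)
  have sup_eq_top : t.sup a = ⊤ := Clopens.ext ((Clopens.coe_finset_sup t a).trans ht)
  have mem_map_sup : y ∈ Φ (t.sup a) := by
    rw [sup_eq_top, map_top]
    trivial
  rw [map_finset_sup, ← SetLike.mem_coe, Clopens.coe_finset_sup] at mem_map_sup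
  obtain ⟨x, -, hx⟩ := Set.mem_iUnion₂.1 mem_map_sup
  exact hya x hx

theorem exists_continuousMap_forall_mem_iff_mem_map [CompactSpace X]
    (hX : IsTopologicalBasis {s : Set X | IsClopen s}) {F : Type*}
    [FunLike F (Clopens X) (Clopens Y)] [BoundedLatticeHomClass F (Clopens X) (Clopens Y)] (Φ : F) :
    ∃ g : C(Y, X), ∀ y (a : Clopens X), g y ∈ a ↔ y ∈ Φ a := by
  choose g hg using exists_forall_mem_iff_mem_map Φ
  refine ⟨⟨g, hX.continuous_iff.2 fun s hs ↦ ?_⟩, hg⟩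
  have preimage_eq : g ⁻¹' s = Φ ⟨s, hs⟩ := Set.ext fun y ↦ hg y ⟨s, hs⟩
  exact preimage_eq ▸ (Φ ⟨s, hs⟩).isOpen

theorem clopensCongr_surjective [CompactSpace X] [T2Space X] [TotallyDisconnectedSpace X]
    [CompactSpace Y] [T2Space Y] [TotallyDisconnectedSpace Y] :
    Function.Surjective (clopensCongr : X ≃ₜ Y → (Clopens X ≃o Clopens Y)) := by
  intro Φ
  obtain ⟨g, hg⟩ := exists_continuousMap_forall_mem_iff_mem_map isTopologicalBasis_isClopen Φ
  obtain ⟨f, hf⟩ := exists_continuousMap_forall_mem_iff_mem_map isTopologicalBasis_isClopen Φ.symm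
  have left_inv (x : X) : g (f x) = x := (eq_of_forall_mem_clopens fun a ha ↦ by
    rwa [hg, hf, Φ.symm_apply_apply]).symm
  have right_inv (y : Y) : f (g y) = y := (eq_of_forall_mem_clopens fun b hb ↦ by
    rwa [hf, hg, Φ.apply_symm_apply]).symm
  let e : X ≃ₜ Y := ⟨⟨f, g, left_inv, right_inv⟩, f.continuous, g.continuous⟩
  exact ⟨e, OrderIso.ext <| funext fun a ↦ SetLike.ext fun y ↦ hg y a⟩

end Duality

section Boxes

variable {κ : Type*}

theorem exists_clopens_pi_subset {X : κ → Type*} [∀ i, TopologicalSpace (X i)]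
    (hX : ∀ i, IsTopologicalBasis {s : Set (X i) | IsClopen s}) {U : Set (∀ i, X i)}
    (hU : IsOpen U) {x : ∀ i, X i} (hx : x ∈ U) :
    ∃ a : ∀ i, Clopens (X i), (∀ i, x i ∈ a i) ∧ {y | ∀ i, y i ∈ a i} ⊆ U := by
  obtain ⟨I, u, hu, hIU⟩ := isOpen_pi_iff.1 hU x hx
  have shrink (i : κ) : ∃ a : Clopens (X i), x i ∈ a ∧ (i ∈ I → (a : Set (X i)) ⊆ u i) := by
    by_cases hi : i ∈ I
    · obtain ⟨V, hV, hxV, hVu⟩ := (hX i).exists_subset_of_mem_open (hu i hi).2 (hu i hi).1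
      exact ⟨⟨V, hV⟩, hxV, fun _ ↦ hVu⟩
    · exact ⟨⊤, trivial, fun h ↦ absurd h hi⟩
  choose a hxa hau using shrink
  exact ⟨a, hxa, fun y hy ↦ hIU fun i hi ↦ hau i hi (hy i)⟩

theorem subset_of_forall_inter_clopens_pi_eq_empty {X : κ → Type*} [∀ i, TopologicalSpace (X i)]
    (hX : ∀ i, IsTopologicalBasis {s : Set (X i) | IsClopen s}) {C D : Set (∀ i, X i)}
    (hD : IsClosed D)
    (h : ∀ a : ∀ i, Clopens (X i), D ∩ {x | ∀ i, x i ∈ a i} = ∅ → C ∩ {x | ∀ i, x i ∈ a i} = ∅) :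
    C ⊆ D := by
  intro x hxC
  by_contra hxD
  obtain ⟨a, hxa, ha⟩ := exists_clopens_pi_subset hX hD.isOpen_compl hxD
  have disjoint_D : D ∩ {x | ∀ i, x i ∈ a i} = ∅ :=
    (Set.disjoint_left.2 fun _ hyD hya ↦ ha hya hyD).inter_eq
  exact Set.eq_empty_iff_forall_notMem.1 (h a disjoint_D) x ⟨hxC, hxa⟩

theorem eq_iff_forall_inter_clopens_pi_eq_empty_iff {X : κ → Type*} [∀ i, TopologicalSpace (X i)]
    (hX : ∀ i, IsTopologicalBasis {s : Set (X i) | IsClopen s}) {C D : Set (∀ i, X i)}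
    (hC : IsClosed C) (hD : IsClosed D) :
    C = D ↔ ∀ a : ∀ i, Clopens (X i),
      (C ∩ {x | ∀ i, x i ∈ a i} = ∅ ↔ D ∩ {x | ∀ i, x i ∈ a i} = ∅) := by
  refine ⟨fun h a ↦ by rw [h], fun h ↦ ?_⟩
  exact (subset_of_forall_inter_clopens_pi_eq_empty hX hD fun a ↦ (h a).2).antisymm
    (subset_of_forall_inter_clopens_pi_eq_empty hX hC fun a ↦ (h a).1)

variable {X Y : Type*} [TopologicalSpace X] [TopologicalSpace Y]

theorem image_comp_inter_clopensCongr_box (f : X ≃ₜ Y) (R : Set (κ → X)) (a : κ → Clopens X) :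
    (f ∘ ·) '' R ∩ {y | ∀ i, y i ∈ clopensCongr f (a i)} =
      (f ∘ ·) '' (R ∩ {x | ∀ i, x i ∈ a i}) := by
  have preimage_box : (f ∘ ·) ⁻¹' {y | ∀ i, y i ∈ clopensCongr f (a i)} =
      {x : κ → X | ∀ i, x i ∈ a i} := by
    simp only [Set.preimage_ofPred_eq, Function.comp_apply, mem_clopensCongr, f.symm_apply_apply]
  rw [← preimage_box, Set.image_inter_preimage]

theorem image_comp_eq_iff_forall_inter_eq_empty_iff
    (hY : IsTopologicalBasis {s : Set Y | IsClopen s}) (f : X ≃ₜ Y)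
    {R : Set (κ → X)} {S : Set (κ → Y)} (hR : IsClosed R) (hS : IsClosed S) :
    (f ∘ ·) '' R = S ↔ ∀ a : κ → Clopens X,
      (R ∩ {x | ∀ i, x i ∈ a i} = ∅ ↔ S ∩ {y | ∀ i, y i ∈ clopensCongr f (a i)} = ∅) := by
  have isClosed_image : IsClosed ((f ∘ ·) '' R) :=
    (Homeomorph.piCongrRight fun _ : κ ↦ f).isClosed_image.2 hR
  rw [eq_iff_forall_inter_clopens_pi_eq_empty_iff (fun _ ↦ hY) isClosed_image hS,
    ((clopensCongr f).surjective.comp_left (α := κ)).forall]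
  refine forall_congr' fun a ↦ ?_
  simp only [Function.comp_apply, image_comp_inter_clopensCongr_box, Set.image_eq_empty]

end Boxes

theorem homeo_iso_iff_clopen_algebra_iso_general {M N : Type*}
    [TopologicalSpace M] [CompactSpace M] [T2Space M] [TotallyDisconnectedSpace M]
    [TopologicalSpace N] [CompactSpace N] [T2Space N] [TotallyDisconnectedSpace N]
    {ι : Type*} {κ : ι → Type*} {R : ∀ i, Set (κ i → M)} {S : ∀ i, Set (κ i → N)}
    (hR : ∀ i, IsClosed (R i)) (hS : ∀ i, IsClosed (S i)) :
    (∃ f : M ≃ₜ N, ∀ i, (f ∘ ·) '' R i = S i) ↔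
    (∃ Φ : Clopens M ≃o Clopens N, ∀ i, ∀ a : κ i → Clopens M,
      (R i ∩ {x | ∀ j, x j ∈ a j} = ∅ ↔ S i ∩ {y | ∀ j, y j ∈ Φ (a j)} = ∅)) := by
  rw [clopensCongr_surjective.exists]
  exact exists_congr fun f ↦ forall_congr' fun i ↦
    image_comp_eq_iff_forall_inter_eq_empty_iff isTopologicalBasis_isClopen f (hR i) (hS i)

/-- For totally disconnected compact metrizable spaces `M`, `N` with closed relations
`R_k ⊆ M^k`, `S_k ⊆ N^k` (`k ≥ 1`), there is a homeomorphism `f : M → N` with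
`f^k[R_k] = S_k` for all `k ≥ 1` iff there is a Boolean algebra isomorphism `Φ` between
the clopen algebras such that `R_k` misses `a_1 × ⋯ × a_k` iff `S_k` misses
`Φ(a_1) × ⋯ × Φ(a_k)` for all clopen `a_1, …, a_k`. -/
theorem homeo_iso_iff_clopen_algebra_iso
    {M N : Type*} [TopologicalSpace M] [CompactSpace M] [MetrizableSpace M]
    [TotallyDisconnectedSpace M]
    [TopologicalSpace N] [CompactSpace N] [MetrizableSpace N]
    [TotallyDisconnectedSpace N]
    (R : ∀ k : ℕ, Set (Fin k → M)) (S : ∀ k : ℕ, Set (Fin k → N))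
    (hR : ∀ k, 1 ≤ k → IsClosed (R k)) (hS : ∀ k, 1 ≤ k → IsClosed (S k)) :
    (∃ f : M ≃ₜ N, ∀ k, 1 ≤ k → (fun x : Fin k → M => (f : M → N) ∘ x) '' R k = S k) ↔
    (∃ Φ : Clopens M ≃o Clopens N, ∀ k, 1 ≤ k → ∀ a : Fin k → Clopens M,
      (R k ∩ {x | ∀ i, x i ∈ a i} = ∅ ↔ S k ∩ {y | ∀ i, y i ∈ Φ (a i)} = ∅)) := by
  simpa only [Subtype.forall] using homeo_iso_iff_clopen_algebra_iso_general
    (fun k : {k // 1 ≤ k} ↦ hR k k.2) (fun k : {k // 1 ≤ k} ↦ hS k k.2)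
end

section
/- Let G and H be Polish groups, let X and Y be Polish spaces, and let e_G : G → X and e_H : H → Y be topological embeddings with dense images. Let 𝒢_G ⊆ X⁴ be the closure of {(e_G(x), e_G(y), e_G(z), e_G(x y⁻¹ z)) : x, y, z ∈ G} and 𝒢_H ⊆ Y⁴ the closure of {(e_H(x), e_H(y), e_H(z), e_H(x y⁻¹ z)) : x, y, z ∈ H}. If φ : X → Y is a homeomorphism with φ⁴[𝒢_G] = 𝒢_H, then φ[e_G[G]] = e_H[H], and the induced bijection ψ = e_H⁻¹ ∘ φ ∘ e_G : G → H is a homeomorphism satisfying ψ(x y⁻¹ z) = ψ(x) ψ(y)⁻¹ ψ(z) for all x, y, z ∈ G, i.e., an isomorphism of the associated topological heaps. -/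
/-- The coordinatewise action of a map on quadruples. -/
def quad4 {A B : Type*} (f : A → B) : A × A × A × A → B × B × B × B :=
  fun p => (f p.1, f p.2.1, f p.2.2.1, f p.2.2.2)

/-!
The heap operation `w = x y⁻¹ z` is determined by the closure of its graph: a point of the closure
whose first three coordinates come from the group also has its fourth coordinate in the group.
Moreover a dense Gδ set `S` in a Baire group satisfies `S S⁻¹ S = G`.

A completely metrizable group is a Gδ set in any Hausdorff space in which it is densely embedded.
So if `G` and `H` are dense in `Y` and the heap graph of `G` lies in the closure of that of `H`,
then `H` traces a dense Gδ set `S` on `G`, and `G = S S⁻¹ S ⊆ H`. Now `G` is a subheap of `H` and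
a dense Gδ set in it, whence `H = G G⁻¹ G ⊆ G`. In particular, a one-sided inclusion of the heap
graphs suffices.
-/

open Filter Function Set Topology Uniformity TopologicalSpace

section GDelta

variable {A Y : Type*} [TopologicalSpace Y]

theorem isGδ_setOf_comap_nhds_le (e : A → Y) (l : Filter A) [IsCountablyGenerated l] :
    IsGδ {y | comap e (𝓝 y) ≤ l} := by
  obtain ⟨V, hV⟩ := l.exists_antitone_basis
  have hInter : {y | comap e (𝓝 y) ≤ l} = ⋂ n, interior (kernImage e (V n)) := by
    ext y
    simp only [mem_ofPred_eq, hV.1.ge_iff, true_imp_iff, mem_comap'', mem_iInter,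
      mem_interior_iff_mem_nhds]
  rw [hInter]
  exact .iInter_of_isOpen fun n => isOpen_interior

theorem isGδ_setOf_cauchy_comap_nhds [UniformSpace A] [IsCountablyGenerated (𝓤 A)] {e : A → Y}
    (he : DenseRange e) : IsGδ {y | Cauchy (comap e (𝓝 y))} := by
  have hne (y : Y) : NeBot (comap e (𝓝 y)) :=
    comap_neBot_iff_frequently.2 (mem_closure_iff_frequently.1 (he y))
  simp only [cauchy_iff_le, prod_comap_comap_eq, ← nhds_prod_eq]
  exact (isGδ_setOf_comap_nhds_le (fun p : A × A => (e p.1, e p.2)) (𝓤 A)).preimage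
    (f := fun y : Y => (y, y)) (by fun_prop)

variable [TopologicalSpace A] {e : A → Y}

theorem isGδ_range_of_isDenseInducing [IsCompletelyPseudoMetrizableSpace A] [T2Space Y]
    (he : IsDenseInducing e) : IsGδ (range e) := by
  let _ := upgradeIsCompletelyPseudoMetrizable A
  suffices range e = {y | Cauchy (comap e (𝓝 y))} from
    this ▸ isGδ_setOf_cauchy_comap_nhds he.dense
  refine Subset.antisymm ?_ fun y hy => ?_
  · rintro _ ⟨a, rfl⟩
    rw [mem_ofPred_eq, ← he.nhds_eq_comap]
    exact cauchy_nhds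
  · have := he.comap_nhds_neBot y
    obtain ⟨a, ha⟩ := CompleteSpace.complete hy
    exact ⟨a, tendsto_nhds_unique ((he.continuous.tendsto a).mono_left ha) tendsto_comap⟩

theorem dense_preimage_of_isGδ [BaireSpace A] (he : IsDenseInducing e) {S : Set Y} (hS : IsGδ S)
    (hd : Dense S) : Dense (e ⁻¹' S) := by
  obtain ⟨U, hU, rfl⟩ := isGδ_iff_eq_iInter_nat.1 hS
  rw [preimage_iInter]
  refine dense_iInter_of_isOpen (fun n => (hU n).preimage he.continuous) fun n => ?_
  rw [← he.dense_image, image_preimage_eq_inter_range]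
  exact (hd.mono (iInter_subset U n)).inter_of_isOpen_left he.dense (hU n)

end GDelta

section Heap

variable {G H Y : Type*} [Group G] [TopologicalSpace G] [Group H] [TopologicalSpace H]

theorem exists_mul_inv_mul_eq_of_dense_isGδ [SeparatelyContinuousMul G] [ContinuousInv G]
    [BaireSpace G] {S : Set G} (hS : IsGδ S) (hd : Dense S) (g : G) :
    ∃ a ∈ S, ∃ b ∈ S, ∃ c ∈ S, a * b⁻¹ * c = g := by
  obtain ⟨c, hc⟩ := hd.nonempty
  let T : G ≃ₜ G :=
    (Homeomorph.inv G).trans ((Homeomorph.mulLeft g).trans (Homeomorph.mulRight c))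
  have hTd : Dense (T ⁻¹' S) := hd.preimage T.isOpenMap
  obtain ⟨b, hb, hTb : g * b⁻¹ * c ∈ S⟩ :=
    (hd.inter_of_Gδ hS (hS.preimage T.continuous) hTd).nonempty
  exact ⟨g * b⁻¹ * c, hTb, c, hc, b, hb, by group⟩

theorem surjective_of_map_mul_inv_mul [IsCompletelyPseudoMetrizableSpace G]
    [SeparatelyContinuousMul H] [ContinuousInv H] [BaireSpace H] [T2Space H] {ψ : G → H}
    (hψ : IsDenseInducing ψ) (hmap : ∀ x y z, ψ (x * y⁻¹ * z) = ψ x * (ψ y)⁻¹ * ψ z) :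
    Surjective ψ := by
  intro h
  obtain ⟨_, ⟨x, rfl⟩, _, ⟨y, rfl⟩, _, ⟨z, rfl⟩, rfl⟩ :=
    exists_mul_inv_mul_eq_of_dense_isGδ (isGδ_range_of_isDenseInducing hψ) hψ.dense h
  exact ⟨x * y⁻¹ * z, hmap x y z⟩

/-- The graph of the heap operation `(x, y, z) ↦ x y⁻¹ z` of a group, transported along a map `e`
out of the group. Its closure is the set `𝒢_G` of the paper. -/
def heapGraph {G X : Type*} [Group G] (e : G → X) : Set (X × X × X × X) :=
  {p | ∃ x y z : G, p = (e x, e y, e z, e (x * y⁻¹ * z))}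

variable [IsTopologicalGroup H] [TopologicalSpace Y] [T2Space Y] {f : H → Y}

theorem eq_of_mem_closure_heapGraph (hf : IsInducing f) {a b c : H} {w : Y}
    (h : (f a, f b, f c, w) ∈ closure (heapGraph f)) : w = f (a * b⁻¹ * c) := by
  obtain ⟨L, _, hlim⟩ : ∃ L : Filter (heapGraph f), L.NeBot ∧
      Tendsto Subtype.val L (𝓝 (f a, f b, f c, w)) :=
    ⟨_, mem_closure_iff_comap_neBot.1 h, tendsto_comap⟩
  choose x y z hxyz using fun p : heapGraph f => p.2
  simp only [funext hxyz, Prod.tendsto_iff] at hlim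
  obtain ⟨hx, hy, hz, hw⟩ := hlim
  rw [← comp_def f, ← hf.tendsto_nhds_iff] at hx hy hz
  exact tendsto_nhds_unique hw ((hf.continuous.tendsto _).comp ((hx.mul hy.inv).mul hz))

theorem range_subset_range_of_heapGraph_subset_closure [SeparatelyContinuousMul G]
    [ContinuousInv G] [BaireSpace G] [IsCompletelyPseudoMetrizableSpace H] {e : G → Y}
    (he : IsDenseInducing e) (hf : IsDenseInducing f)
    (hef : heapGraph e ⊆ closure (heapGraph f)) : range e ⊆ range f := by
  have hfGδ : IsGδ (range f) := isGδ_range_of_isDenseInducing hf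
  rintro _ ⟨g, rfl⟩
  obtain ⟨x, ⟨a, ha⟩, y, ⟨b, hb⟩, z, ⟨c, hc⟩, rfl⟩ :=
    exists_mul_inv_mul_eq_of_dense_isGδ (hfGδ.preimage he.continuous)
      (dense_preimage_of_isGδ he hfGδ hf.dense) g
  have hmem : (f a, f b, f c, e (x * y⁻¹ * z)) ∈ closure (heapGraph f) := by
    rw [ha, hb, hc]
    exact hef ⟨x, y, z, rfl⟩
  exact ⟨a * b⁻¹ * c, (eq_of_mem_closure_heapGraph hf.isInducing hmem).symm⟩

end Heap

theorem heap_rigidity_general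
    {G H Y : Type*} [Group G] [TopologicalSpace G] [IsTopologicalGroup G]
    [IsCompletelyMetrizableSpace G] [Group H] [TopologicalSpace H] [IsTopologicalGroup H]
    [IsCompletelyMetrizableSpace H] [TopologicalSpace Y] [T2Space Y]
    {e : G → Y} (he : IsEmbedding e) (hed : DenseRange e)
    {f : H → Y} (hf : IsEmbedding f) (hfd : DenseRange f)
    (hef : heapGraph e ⊆ closure (heapGraph f)) :
    range e = range f ∧ ∃ ψ : G ≃ₜ H, (∀ g, f (ψ g) = e g) ∧
      ∀ x y z, ψ (x * y⁻¹ * z) = ψ x * (ψ y)⁻¹ * ψ z := by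
  have hsub : range e ⊆ range f :=
    range_subset_range_of_heapGraph_subset_closure ⟨he.isInducing, hed⟩ ⟨hf.isInducing, hfd⟩ hef
  choose ψ hψ using fun g => hsub (mem_range_self g)
  obtain rfl : f ∘ ψ = e := funext hψ
  have hmap (x y z : G) : ψ (x * y⁻¹ * z) = ψ x * (ψ y)⁻¹ * ψ z :=
    hf.injective (eq_of_mem_closure_heapGraph hf.isInducing (hef ⟨x, y, z, rfl⟩))
  have hψemb : IsEmbedding ψ := hf.of_comp_iff.1 he
  have hψd : DenseRange ψ := by
    rw [DenseRange, ← IsDenseInducing.dense_image ⟨hf.isInducing, hfd⟩, ← range_comp]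
    exact hed
  have hsurj : Surjective ψ := surjective_of_map_mul_inv_mul ⟨hψemb.isInducing, hψd⟩ hmap
  exact ⟨hsurj.range_comp f, hψemb.toHomeomorphOfSurjective hsurj, fun _ => rfl, hmap⟩

/-- Rigidity for heaps: if Polish groups `G`, `H` are densely embedded in Polish spaces
`X`, `Y` and a homeomorphism `φ : X → Y` maps the closure of the graph of the heap
operation `(x,y,z) ↦ x y⁻¹ z` of `G` onto that of `H`, then `φ` maps the copy of `G`
onto the copy of `H` and induces an isomorphism of the associated topological heaps. -/
theorem heap_rigidity
    {G H X Y : Type*} [Group G] [TopologicalSpace G] [IsTopologicalGroup G] [PolishSpace G]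
    [Group H] [TopologicalSpace H] [IsTopologicalGroup H] [PolishSpace H]
    [TopologicalSpace X] [PolishSpace X] [TopologicalSpace Y] [PolishSpace Y]
    (eG : G → X) (hG : Topology.IsEmbedding eG) (hGd : Dense (Set.range eG))
    (eH : H → Y) (hH : Topology.IsEmbedding eH) (hHd : Dense (Set.range eH))
    (φ : X ≃ₜ Y)
    (hφ : quad4 φ '' closure {p : X × X × X × X |
        ∃ x y z : G, p = (eG x, eG y, eG z, eG (x * y⁻¹ * z))} =
      closure {p : Y × Y × Y × Y | ∃ x y z : H, p = (eH x, eH y, eH z, eH (x * y⁻¹ * z))}) :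
    φ '' Set.range eG = Set.range eH ∧
    ∃ ψ : G ≃ₜ H, (∀ g : G, eH (ψ g) = φ (eG g)) ∧
      ∀ x y z : G, ψ (x * y⁻¹ * z) = ψ x * (ψ y)⁻¹ * ψ z := by
  rw [← Set.range_comp]
  exact heap_rigidity_general (φ.isEmbedding.comp hG)
    (φ.surjective.denseRange.comp hGd φ.continuous) hH hHd
    fun _ ⟨x, y, z, h⟩ => hφ.subset ⟨_, subset_closure ⟨x, y, z, rfl⟩, h.symm⟩
end

section
/- Let (M, d_M) and (N, d_N) be nonempty complete separable metric spaces and, for each k ∈ ℕ, let a_k ∈ ℕ and let R_k ⊆ M^{a_k} and S_k ⊆ N^{a_k} be closed. Then there exists a bijection φ : M → N with φ and φ⁻¹ uniformly continuous and φ^{a_k}[R_k] = S_k for all k, if and only if there exist sequences (x_n)_{n∈ℕ} in M and (y_n)_{n∈ℕ} in N such that: {x_n : n ∈ ℕ} is dense in M and {y_n : n ∈ ℕ} is dense in N; for each k, R_k is the closure of R_k ∩ {x_n : n ∈ ℕ}^{a_k} and S_k is the closure of S_k ∩ {y_n : n ∈ ℕ}^{a_k}; for every ε > 0 there is δ > 0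 such that for all i, j, d_M(x_i,x_j) < δ implies d_N(y_i,y_j) < ε; for every ε > 0 there is δ > 0 such that for all i, j, d_N(y_i,y_j) < δ implies d_M(x_i,x_j) < ε; and for every k and all indices i_1,…,i_{a_k} ∈ ℕ, (x_{i_1},…,x_{i_{a_k}}) ∈ R_k if and only if (y_{i_1},…,y_{i_{a_k}}) ∈ S_k. -/
/-!
A sequence `x` that is dense in a complete Hausdorff uniform space `M` exhibits `M` as the
completion of `ℕ` for the uniform structure pulled back along `x`. The two uniform continuity
conditions say that `x` and `y` pull back the same structure, so that `M` and `N` are completions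
of the same space and `x n ↦ y n` extends to a uniform isomorphism; it respects the relations
because these are the closures of their traces on the sequences. Conversely, second countability
makes every relation separable, so a dense sequence can be chosen to contain all coordinates of
countable dense subsets of the relations, and it is carried over to `N` by the isomorphism.
-/

open Set TopologicalSpace

section UniformStructures

theorem exists_uniformEquiv_comp_eq_of_comap_eq {ι M N : Type*}
    [uM : UniformSpace M] [CompleteSpace M] [T0Space M]
    [uN : UniformSpace N] [CompleteSpace N] [T0Space N]
    {x : ι → M} {y : ι → N} (hx : DenseRange x) (hy : DenseRange y)
    (hxy : uM.comap x = uN.comap y) : ∃ φ : M ≃ᵤ N, φ ∘ x = y := by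
  let _ : UniformSpace ι := uM.comap x
  let completionM : AbstractCompletion ι := ⟨M, x, uM, ‹_›, ‹_›, ⟨rfl⟩, hx⟩
  let completionN : AbstractCompletion ι :=
    ⟨N, y, uN, ‹_›, ‹_›, isUniformInducing_iff_uniformSpace.2 hxy.symm, hy⟩
  exact ⟨completionM.compareEquiv completionN, funext (completionM.compare_coe completionN)⟩

theorem comap_uniformSpace_le_comap_iff_dist {ι M N : Type*}
    [PseudoMetricSpace M] [PseudoMetricSpace N] {x : ι → M} {y : ι → N} :
    UniformSpace.comap x inferInstance ≤ UniformSpace.comap y inferInstance ↔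
      ∀ ε : ℝ, 0 < ε → ∃ δ : ℝ, 0 < δ ∧ ∀ i j, dist (x i) (x j) < δ → dist (y i) (y j) < ε := by
  refine ((Metric.uniformity_basis_dist.comap (Prod.map x x)).le_basis_iff
    (Metric.uniformity_basis_dist.comap (Prod.map y y))).trans ?_
  simp only [subset_def, Prod.forall, mem_preimage, mem_ofPred_eq, Prod.map_apply]

end UniformStructures

section Traces

variable {A M N : Type*}

theorem inter_forall_mem_range_congr {S T : Set (A → N)} {ι : Type*} {y : ι → N}
    (hST : ∀ idx : A → ι, y ∘ idx ∈ S ↔ y ∘ idx ∈ T) :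
    S ∩ {v | ∀ i, v i ∈ range y} = T ∩ {v | ∀ i, v i ∈ range y} := by
  ext v
  refine and_congr_left fun hv => ?_
  choose idx hidx using hv
  obtain rfl : y ∘ idx = v := funext hidx
  exact hST idx

theorem image_comp_setOf_forall_mem (f : M → N) (D : Set M) :
    (f ∘ ·) '' {u : A → M | ∀ i, u i ∈ D} = {v | ∀ i, v i ∈ f '' D} := by
  refine Subset.antisymm ?_ fun v hv => ?_
  · rintro _ ⟨u, hu, rfl⟩ i
    exact mem_image_of_mem f (hu i)
  · choose u hu hfu using hv
    exact ⟨u, hu, funext hfu⟩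

variable [TopologicalSpace M] [TopologicalSpace N]

theorem image_comp_eq_closure_inter (φ : M ≃ₜ N) {R : Set (A → M)} {D : Set M}
    (hR : R = closure (R ∩ {u | ∀ i, u i ∈ D})) :
    (φ ∘ ·) '' R = closure ((φ ∘ ·) '' R ∩ {v | ∀ i, v i ∈ φ '' D}) := by
  rw [← image_comp_setOf_forall_mem, ← image_inter φ.injective.comp_left]
  conv_lhs => rw [hR]
  exact (Homeomorph.piCongrRight fun _ : A => φ).image_closure _

theorem exists_countable_subset_closure_inter [SecondCountableTopology M] [Countable A]
    (R : Set (A → M)) :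
    ∃ D : Set M, D.Countable ∧ R ⊆ closure (R ∩ {u | ∀ i, u i ∈ D}) := by
  obtain ⟨C, hC_countable, hC⟩ := exists_countable_dense R
  refine ⟨⋃ u ∈ C, range u.1, hC_countable.biUnion fun u _ => countable_range u.1,
    (Subtype.dense_iff.1 hC).trans (closure_mono ?_)⟩
  rintro _ ⟨u, hu, rfl⟩
  exact ⟨u.2, fun i => mem_biUnion hu (mem_range_self i)⟩

theorem exists_denseRange_forall_eq_closure_inter [SecondCountableTopology M] [Nonempty M]
    {K : Type*} [Countable K] {A : K → Type*} [∀ k, Countable (A k)]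
    {R : ∀ k, Set (A k → M)} (hR : ∀ k, IsClosed (R k)) :
    ∃ x : ℕ → M, DenseRange x ∧ ∀ k, R k = closure (R k ∩ {u | ∀ i, u i ∈ range x}) := by
  choose D hD_countable hD using fun k => exists_countable_subset_closure_inter (R k)
  obtain ⟨E, hE_countable, hE⟩ := exists_countable_dense M
  obtain ⟨x, hx⟩ := (hE_countable.union (countable_iUnion hD_countable)).exists_eq_range
    hE.nonempty.inl
  refine ⟨x, hE.mono (hx ▸ subset_union_left), fun k => Subset.antisymm ?_ ?_⟩
  · refine (hD k).trans (closure_mono (inter_subset_inter_right _ fun u hu i => ?_))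
    exact hx ▸ Or.inr (mem_iUnion_of_mem k (hu i))
  · exact closure_minimal inter_subset_left (hR k)

end Traces

theorem unif_homeo_iso_iff_sequences_general {M N : Type*}
    [uM : UniformSpace M] [CompleteSpace M] [T0Space M] [SecondCountableTopology M] [Nonempty M]
    [uN : UniformSpace N] [CompleteSpace N] [T0Space N]
    {K : Type*} [Countable K] {A : K → Type*} [∀ k, Countable (A k)]
    (R : ∀ k, Set (A k → M)) (S : ∀ k, Set (A k → N)) (hR : ∀ k, IsClosed (R k)) :
    (∃ φ : M ≃ N, UniformContinuous φ ∧ UniformContinuous φ.symm ∧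
      ∀ k, (fun x : A k → M => φ ∘ x) '' R k = S k) ↔
    (∃ (x : ℕ → M) (y : ℕ → N), DenseRange x ∧ DenseRange y ∧
      (∀ k, R k = closure (R k ∩ {u | ∀ i, u i ∈ range x})) ∧
      (∀ k, S k = closure (S k ∩ {v | ∀ i, v i ∈ range y})) ∧
      uM.comap x ≤ uN.comap y ∧ uN.comap y ≤ uM.comap x ∧
      (∀ k, ∀ idx : A k → ℕ,
        ((fun i => x (idx i)) ∈ R k ↔ (fun i => y (idx i)) ∈ S k))) := by
  constructor
  · rintro ⟨φ, hφ, hφ_symm, hRS⟩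
    obtain rfl : _ = S := funext hRS
    let ψ : M ≃ᵤ N := ⟨φ, hφ, hφ_symm⟩
    obtain ⟨x, hx, hRx⟩ := exists_denseRange_forall_eq_closure_inter hR
    have hcomap : uM.comap x = uN.comap (φ ∘ x) := by
      rw [UniformSpace.comap_comap, ← ψ.isUniformInducing.comap_uniformSpace]
    refine ⟨x, φ ∘ x, hx, φ.surjective.denseRange.comp hx hφ.continuous, hRx, fun k => ?_,
      hcomap.le, hcomap.ge, fun k idx => (φ.injective.comp_left.mem_set_image).symm⟩
    rw [range_comp]
    exact image_comp_eq_closure_inter ψ.toHomeomorph (hRx k)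
  · rintro ⟨x, y, hx, hy, hRx, hSy, hxy, hyx, hrel⟩
    obtain ⟨φ, rfl⟩ := exists_uniformEquiv_comp_eq_of_comap_eq hx hy (hxy.antisymm hyx)
    refine ⟨φ.toEquiv, φ.uniformContinuous, φ.symm.uniformContinuous, fun k => ?_⟩
    have himage := image_comp_eq_closure_inter φ.toHomeomorph (hRx k)
    have htrace : ∀ idx : A k → ℕ, (φ ∘ x) ∘ idx ∈ (φ ∘ ·) '' R k ↔ (φ ∘ x) ∘ idx ∈ S k :=
      fun idx => (φ.injective.comp_left.mem_set_image).trans (hrel k idx)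
    rw [hSy k, ← inter_forall_mem_range_congr htrace, range_comp]
    exact himage

/-- Two Polish metric structures `(M, (R_k))`, `(N, (S_k))` with closed relations of
arities `a_k` are uniformly homeomorphically isomorphic iff there are dense sequences
`(x_n)` in `M` and `(y_n)` in `N` such that the relations are determined by their
restrictions to the sequences, the correspondence `x_n ↦ y_n` is uniformly continuous
in both directions, and it preserves the relations in both directions. -/
theorem unif_homeo_iso_iff_sequences
    {M N : Type*} [MetricSpace M] [CompleteSpace M] [TopologicalSpace.SeparableSpace M] [Nonempty M]
    [MetricSpace N] [CompleteSpace N] [TopologicalSpace.SeparableSpace N] [Nonempty N]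
    (a : ℕ → ℕ) (R : ∀ k : ℕ, Set (Fin (a k) → M)) (S : ∀ k : ℕ, Set (Fin (a k) → N))
    (hR : ∀ k, IsClosed (R k)) (hS : ∀ k, IsClosed (S k)) :
    (∃ φ : M ≃ N, UniformContinuous (φ : M → N) ∧ UniformContinuous (φ.symm : N → M) ∧
      ∀ k, (fun x : Fin (a k) → M => (φ : M → N) ∘ x) '' R k = S k) ↔
    (∃ (x : ℕ → M) (y : ℕ → N),
      Dense (Set.range x) ∧ Dense (Set.range y) ∧
      (∀ k, R k = closure (R k ∩ {u | ∀ i, u i ∈ Set.range x})) ∧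
      (∀ k, S k = closure (S k ∩ {v | ∀ i, v i ∈ Set.range y})) ∧
      (∀ ε : ℝ, 0 < ε → ∃ δ : ℝ, 0 < δ ∧
        ∀ i j : ℕ, dist (x i) (x j) < δ → dist (y i) (y j) < ε) ∧
      (∀ ε : ℝ, 0 < ε → ∃ δ : ℝ, 0 < δ ∧
        ∀ i j : ℕ, dist (y i) (y j) < δ → dist (x i) (x j) < ε) ∧
      (∀ k, ∀ idx : Fin (a k) → ℕ,
        ((fun i => x (idx i)) ∈ R k ↔ (fun i => y (idx i)) ∈ S k))) := by
  have := UniformSpace.secondCountable_of_separable M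
  simpa only [DenseRange, comap_uniformSpace_le_comap_iff_dist] using
    unif_homeo_iso_iff_sequences_general R S hR
end

section
/- Let G be an uncountable, non-compact, locally compact Polish group admitting a neighborhood basis at the identity consisting of open subgroups. Then the one-point (Alexandrov) compactification of G is homeomorphic to the Cantor space 2^ℕ. -/
/-!
By Brouwer's characterization, the Cantor space is the only nonempty, compact, zero-dimensional,
second countable space without isolated points. A locally compact, zero-dimensional, second
countable space has a one-point compactification of this kind as soon as it is perfect and
noncompact, noncompactness being what makes `∞` an accumulation point. A separable group with an
isolated point is discrete, hence countable, so uncountable separable groups are perfect.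

For Brouwer's theorem, enumerate the clopen sets as `C 0, C 1, …` and cut the space repeatedly into
two nonempty clopen pieces, making sure that every piece produced at stage `n` lies either inside or
outside `C n`. A point is then determined by the branch of pieces that contain it, and by
compactness every branch occurs.
-/

open Set TopologicalSpace Topology PiNat

section PartitionScheme

variable {β X : Type*} {A : List β → Set X}

/-- A partition scheme is a scheme of sets, indexed by finite words as in `CantorScheme`, whose root
is the whole space and in which the children of each node partition it. As in `PiNat.res`, words
grow at the head. Children are allowed to be empty. -/
structure IsPartitionScheme (A : List β → Set X) : Prop where
  nil : A [] = univ
  iUnion_cons : ∀ l, ⋃ b, A (b :: l) = A l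
  disjoint : CantorScheme.Disjoint A

namespace IsPartitionScheme

theorem antitone (hA : IsPartitionScheme A) : CantorScheme.Antitone A := fun l b =>
  (subset_iUnion (fun b => A (b :: l)) b).trans (hA.iUnion_cons l).subset

theorem exists_forall_mem_res (hA : IsPartitionScheme A) (x : X) :
    ∃ s : ℕ → β, ∀ n, x ∈ A (res s n) := by
  have exists_child (l : {l // x ∈ A l}) : ∃ b, x ∈ A (b :: l) :=
    mem_iUnion.1 ((hA.iUnion_cons l).superset l.2)
  choose child mem_child using exists_child
  let node (n : ℕ) : {l // x ∈ A l} :=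
    Nat.rec ⟨[], hA.nil.superset (mem_univ x)⟩ (fun _ l => ⟨child l :: l, mem_child l⟩) n
  have res_child (n : ℕ) : res (fun k => child (node k)) n = (node n).1 := by
    induction n with
    | zero => rfl
    | succ n ih => rw [res_succ, ih]
  exact ⟨fun k => child (node k), fun n => res_child n ▸ (node n).2⟩

theorem res_eq_res_of_mem (hA : IsPartitionScheme A) {x : X} {s t : ℕ → β} {n : ℕ}
    (hs : x ∈ A (res s n)) (ht : x ∈ A (res t n)) : res s n = res t n := by
  induction n with
  | zero => rfl
  | succ n ih =>
    have parent_eq : res s n = res t n := ih (hA.antitone _ _ hs) (hA.antitone _ _ ht)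
    rw [res_succ] at hs
    rw [res_succ, ← parent_eq] at ht
    rw [res_succ, res_succ, parent_eq, (hA.disjoint _).eq (not_disjoint_iff.2 ⟨x, hs, ht⟩)]

/-- The address of a point is the branch of a partition scheme formed by the sets containing it. -/
noncomputable def address (hA : IsPartitionScheme A) (x : X) : ℕ → β :=
  (hA.exists_forall_mem_res x).choose

theorem mem_res_address (hA : IsPartitionScheme A) (x : X) (n : ℕ) :
    x ∈ A (res (hA.address x) n) :=
  (hA.exists_forall_mem_res x).choose_spec n

theorem preimage_address_cylinder (hA : IsPartitionScheme A) (s : ℕ → β) (n : ℕ) :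
    hA.address ⁻¹' cylinder s n = A (res s n) := by
  ext x
  rw [cylinder_eq_res]
  exact ⟨fun h => h ▸ hA.mem_res_address x n, hA.res_eq_res_of_mem (hA.mem_res_address x n)⟩

theorem injective_address (hA : IsPartitionScheme A)
    (hsub : ∀ s : ℕ → β, (⋂ n, A (res s n)).Subsingleton) : Function.Injective hA.address :=
  fun x y hxy => hsub (hA.address x) (mem_iInter.2 (hA.mem_res_address x))
    (mem_iInter.2 (hxy ▸ hA.mem_res_address y))

variable [TopologicalSpace X]

theorem continuous_address [TopologicalSpace β] [DiscreteTopology β] (hA : IsPartitionScheme A)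
    (hopen : ∀ l, IsOpen (A l)) : Continuous hA.address := by
  refine (isTopologicalBasis_cylinders fun _ => β).continuous_iff.2 ?_
  rintro _ ⟨s, n, rfl⟩
  exact hA.preimage_address_cylinder s n ▸ hopen _

theorem surjective_address [CompactSpace X] (hA : IsPartitionScheme A)
    (hclosed : ∀ l, IsClosed (A l)) (hne : ∀ l, (A l).Nonempty) :
    Function.Surjective hA.address := by
  intro s
  obtain ⟨x, hx⟩ : (⋂ n, A (res s n)).Nonempty :=
    IsCompact.nonempty_iInter_of_sequence_nonempty_isCompact_isClosed _
      (fun _ => hA.antitone _ _) (fun _ => hne _) (hclosed _).isCompact (fun _ => hclosed _)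
  exact ⟨x, res_injective <| funext fun n =>
    hA.res_eq_res_of_mem (hA.mem_res_address x n) (mem_iInter.1 hx n)⟩

theorem nonempty_homeomorph [TopologicalSpace β] [DiscreteTopology β] [CompactSpace X]
    (hA : IsPartitionScheme A) (hclopen : ∀ l, IsClopen (A l)) (hne : ∀ l, (A l).Nonempty)
    (hsub : ∀ s : ℕ → β, (⋂ n, A (res s n)).Subsingleton) : Nonempty (X ≃ₜ (ℕ → β)) :=
  have bijective : Function.Bijective hA.address :=
    ⟨hA.injective_address hsub, hA.surjective_address (fun l => (hclopen l).isClosed) hne⟩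
  ⟨Continuous.homeoOfEquivCompactToT2 (f := Equiv.ofBijective hA.address bijective)
    (hA.continuous_address fun l => (hclopen l).isOpen)⟩

end IsPartitionScheme

end PartitionScheme

section Brouwer

variable {X : Type*} [TopologicalSpace X] [TotallySeparatedSpace X] [PerfectSpace X]

theorem exists_isClopen_inter_diff_nonempty {S : Set X} (hS : IsOpen S) (hne : S.Nonempty) :
    ∃ D, IsClopen D ∧ (S ∩ D).Nonempty ∧ (S \ D).Nonempty := by
  obtain ⟨x, hx⟩ := hne
  obtain ⟨y, ⟨hy, -⟩, hyx⟩ :=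
    preperfect_iff_nhds.1 PerfectSpace.univ_preperfect x (mem_univ x) S (hS.mem_nhds hx)
  obtain ⟨D, hD, hxD, hyD⟩ := exists_isClopen_of_totally_separated hyx.symm
  exact ⟨D, hD, ⟨x, hx, hxD⟩, ⟨y, hy, hyD⟩⟩

theorem exists_isClopen_bipartition {S C : Set X} (hS : IsClopen S) (hne : S.Nonempty)
    (hC : IsClopen C) :
    ∃ T : Bool → Set X, (∀ b, IsClopen (T b) ∧ (T b).Nonempty) ∧ ⋃ b, T b = S ∧
      Pairwise (fun a b => Disjoint (T a) (T b)) ∧ ∀ b, T b ⊆ C ∨ Disjoint (T b) C := by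
  -- Cut along `C` itself, unless that leaves a piece empty; then `S` does not straddle `C` anyway.
  obtain ⟨D, hD, hin, hout, hcut⟩ : ∃ D, IsClopen D ∧ (S ∩ D).Nonempty ∧ (S \ D).Nonempty ∧
      (D = C ∨ S ⊆ C ∨ Disjoint S C) := by
    by_cases hcross : (S ∩ C).Nonempty ∧ (S \ C).Nonempty
    · exact ⟨C, hC, hcross.1, hcross.2, .inl rfl⟩
    · obtain ⟨D, hD, hin, hout⟩ := exists_isClopen_inter_diff_nonempty hS.isOpen hne
      refine ⟨D, hD, hin, hout, .inr ?_⟩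
      rwa [← sdiff_eq_empty, ← not_nonempty_iff_eq_empty, disjoint_iff_inter_eq_empty,
        ← not_nonempty_iff_eq_empty, or_comm, ← not_and_or]
  refine ⟨fun b => cond b (S ∩ D) (S \ D), ?_, ?_, ?_, ?_⟩
  · exact Bool.forall_bool.2 ⟨⟨hS.diff hD, hout⟩, ⟨hS.inter hD, hin⟩⟩
  · rw [← union_eq_iUnion, inter_union_sdiff]
  · exact pairwise_disjoint_on_bool.2 disjoint_sdiff_inter.symm
  · rcases hcut with rfl | hsub | hdisj
    · exact Bool.forall_bool.2 ⟨.inr disjoint_sdiff_left, .inl inter_subset_right⟩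
    · exact Bool.forall_bool.2 ⟨.inl (sdiff_subset.trans hsub), .inl (inter_subset_left.trans hsub)⟩
    · exact Bool.forall_bool.2
        ⟨.inr (hdisj.mono_left sdiff_subset), .inr (hdisj.mono_left inter_subset_left)⟩

theorem exists_isPartitionScheme_subset_or_disjoint [Nonempty X] {C : ℕ → Set X}
    (hC : ∀ n, IsClopen (C n)) :
    ∃ A : List Bool → Set X, IsPartitionScheme A ∧ (∀ l, IsClopen (A l) ∧ (A l).Nonempty) ∧
      ∀ b l, A (b :: l) ⊆ C l.length ∨ Disjoint (A (b :: l)) (C l.length) := by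
  choose T hT hunion hdisj hcut using fun (S : {S : Set X // IsClopen S ∧ S.Nonempty}) (n : ℕ) =>
    exists_isClopen_bipartition S.2.1 S.2.2 (hC n)
  let A (l : List Bool) : {S : Set X // IsClopen S ∧ S.Nonempty} :=
    List.rec ⟨univ, isClopen_univ, univ_nonempty⟩
      (fun b l S => ⟨T S l.length b, hT S l.length b⟩) l
  exact ⟨fun l => (A l).1, ⟨rfl, fun l => hunion (A l) _, fun l => hdisj (A l) _⟩,
    fun l => (A l).2, fun b l => hcut (A l) _ b⟩

theorem nonempty_homeomorph_nat_bool [CompactSpace X] [SecondCountableTopology X] [Nonempty X] :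
    Nonempty (X ≃ₜ (ℕ → Bool)) := by
  have : Countable (Clopens X) := Clopens.countable_iff_secondCountable.2 inferInstance
  obtain ⟨C, hC⟩ := exists_surjective_nat (Clopens X)
  obtain ⟨A, hA, hclopen, hcut⟩ :=
    exists_isPartitionScheme_subset_or_disjoint fun n => (C n).isClopen
  refine hA.nonempty_homeomorph (fun l => (hclopen l).1) (fun l => (hclopen l).2) ?_
  intro s x hx y hy
  by_contra hxy
  obtain ⟨D, hD, hxD, hyD⟩ := exists_isClopen_of_totally_separated hxy
  obtain ⟨n, hn⟩ := hC ⟨D, hD⟩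
  have hcut_n : A (res s (n + 1)) ⊆ D ∨ Disjoint (A (res s (n + 1))) D := by
    simpa only [res_succ, res_length, hn, Clopens.coe_mk] using hcut (s n) (res s n)
  rcases hcut_n with hsub | hdisj
  · exact hyD (hsub (mem_iInter.1 hy _))
  · exact disjoint_left.1 hdisj (mem_iInter.1 hx _) hxD

end Brouwer

section OnePoint

variable {X : Type*} [TopologicalSpace X]

theorem perfectSpace_onePoint [PerfectSpace X] [NoncompactSpace X] : PerfectSpace (OnePoint X) :=
  perfectSpace_iff_forall_not_isolated.2 OnePoint.nhdsNE_neBot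

variable [LocallyCompactSpace X]

theorem totallySeparatedSpace_onePoint [TotallySeparatedSpace X] :
    TotallySeparatedSpace (OnePoint X) := by
  have separate (x : X) (y : OnePoint X) (hxy : (x : OnePoint X) ≠ y) :
      ∃ V : Set (OnePoint X), IsClopen V ∧ ↑x ∈ V ∧ y ∈ Vᶜ := by
    have hopen : IsOpen ((↑) ⁻¹' {y}ᶜ : Set X) :=
      isOpen_compl_singleton.preimage OnePoint.continuous_coe
    obtain ⟨K, hK, hxK, hKy⟩ := exists_compact_subset hopen hxy
    obtain ⟨V, hV, hxV, hVint⟩ :=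
      loc_compact_Haus_tot_disc_of_zero_dim.exists_subset_of_mem_open hxK isOpen_interior
    have hVK : V ⊆ K := hVint.trans interior_subset
    refine ⟨(↑) '' V, ⟨?_, OnePoint.isOpen_image_coe.2 hV.isOpen⟩, mem_image_of_mem _ hxV, ?_⟩
    · exact OnePoint.isClosed_image_coe.2 ⟨hV.isClosed, hK.of_isClosed_subset hV.isClosed hVK⟩
    · rintro ⟨z, hz, rfl⟩
      exact hKy (hVK hz) rfl
  refine totallySeparatedSpace_iff_exists_isClopen.2 fun x y hxy => ?_
  induction x using OnePoint.rec with
  | coe x => exact separate x y hxy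
  | infty =>
    lift y to X using hxy.symm
    obtain ⟨V, hV, hy, hinf⟩ := separate y _ hxy.symm
    exact ⟨Vᶜ, hV.compl, hinf, not_not_intro hy⟩

theorem secondCountableTopology_onePoint [T2Space X] [SecondCountableTopology X] :
    SecondCountableTopology (OnePoint X) := by
  let K : CompactExhaustion X := default
  let B : Set (Set (OnePoint X)) :=
    image (↑) '' countableBasis X ∪ range fun n => ((↑) '' K n)ᶜ
  have hB : IsTopologicalBasis B := by
    refine isTopologicalBasis_of_isOpen_of_nhds ?_ fun x U hx hU => ?_
    · rintro _ (⟨V, hV, rfl⟩ | ⟨n, rfl⟩)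
      · exact OnePoint.isOpen_image_coe.2 (isOpen_of_mem_countableBasis hV)
      · exact OnePoint.isOpen_compl_image_coe.2 ⟨(K.isCompact n).isClosed, K.isCompact n⟩
    · induction x using OnePoint.rec with
      | coe x =>
        obtain ⟨V, hV, hxV, hVU⟩ := (isBasis_countableBasis X).exists_subset_of_mem_open
          (a := x) hx (hU.preimage OnePoint.continuous_coe)
        exact ⟨_, .inl ⟨V, hV, rfl⟩, mem_image_of_mem _ hxV, image_subset_iff.2 hVU⟩
      | infty =>
        obtain ⟨n, hn⟩ := K.exists_superset_of_isCompact ((OnePoint.isOpen_def.1 hU).1 hx)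
        refine ⟨_, .inr ⟨n, rfl⟩, by simp, compl_subset_comm.1 fun y hy => ?_⟩
        lift y to X using (ne_of_mem_of_not_mem hx hy).symm
        exact mem_image_of_mem _ (hn hy)
  exact hB.secondCountableTopology
    (((countable_countableBasis X).image _).union (countable_range _))

theorem onePoint_homeomorphic_cantor_general [TotallySeparatedSpace X]
    [SecondCountableTopology X] [PerfectSpace X] [NoncompactSpace X] :
    Nonempty (OnePoint X ≃ₜ (ℕ → Bool)) := by
  have := totallySeparatedSpace_onePoint (X := X)
  have := secondCountableTopology_onePoint (X := X)
  have := perfectSpace_onePoint (X := X)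
  exact nonempty_homeomorph_nat_bool

end OnePoint

theorem perfectSpace_of_uncountable_separable_group {G : Type*} [Group G] [TopologicalSpace G]
    [ContinuousMul G] [SeparableSpace G] [Uncountable G] : PerfectSpace G := by
  refine perfectSpace_iff_forall_not_isolated.2 fun g => ?_
  by_contra hg
  have isOpen_one : IsOpen ({1} : Set G) := by
    have isOpen_g : IsOpen ({g} : Set G) :=
      (isOpen_singleton_iff_punctured_nhds g).2 (Filter.not_neBot.1 hg)
    simpa only [image_singleton, inv_mul_cancel] using isOpenMap_mul_left g⁻¹ _ isOpen_g
  have := discreteTopology_of_isOpen_singleton_one isOpen_one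
  exact not_countable (α := G) (separableSpace_iff_countable.1 inferInstance)

/-- The one-point compactification of an uncountable, non-compact, locally compact,
non-Archimedean Polish group is homeomorphic to the Cantor space `2^ℕ`. -/
theorem onePoint_homeomorphic_cantor
    {G : Type*} [Group G] [TopologicalSpace G] [NonarchimedeanGroup G] [PolishSpace G]
    [LocallyCompactSpace G] [NoncompactSpace G] [Uncountable G] :
    Nonempty (OnePoint G ≃ₜ (ℕ → Bool)) := by
  have := perfectSpace_of_uncountable_separable_group (G := G)
  exact onePoint_homeomorphic_cantor_general
end

section
/- Every Polish group admitting a neighborhood basis at the identity consisting of open subgroups has a compatible left-invariant metric taking values only in the set {0} ∪ {1/n : n ≥ 1}. -/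
/-!
If the open subgroups `V n` form a neighborhood basis at `1`, then `x ↦ (x V n)ₙ` embeds `G` into
the product of the discrete coset spaces `G ⧸ V n`, and left translation by `g` preserves the set of
coordinates at which two points agree. The metric of first difference on the product, whose
nonzero values are the powers of `1 / 2`, therefore pulls back to a left-invariant metric on `G`.
-/

open Filter Topology

section FirstDifference

attribute [local instance] PiNat.dist

theorem piNat_dist_le_dist {E F : ℕ → Type*} {x y : ∀ n, E n} {x' y' : ∀ n, F n}
    (h : ∀ n, x n = y n → x' n = y' n) : dist x' y' ≤ dist x y := by
  rcases eq_or_ne x y with rfl | hxy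
  · rw [funext fun n ↦ h n rfl, PiNat.dist_self, PiNat.dist_self]
  · rw [PiNat.dist_eq_of_ne hxy, ← PiNat.mem_cylinder_iff_dist_le]
    exact fun i hi ↦ h i (PiNat.apply_eq_of_lt_firstDiff hi)

theorem piNat_dist_congr {E F : ℕ → Type*} {x y : ∀ n, E n} {x' y' : ∀ n, F n}
    (h : ∀ n, x n = y n ↔ x' n = y' n) : dist x y = dist x' y' :=
  le_antisymm (piNat_dist_le_dist fun n ↦ (h n).2) (piNat_dist_le_dist fun n ↦ (h n).1)

theorem piNat_dist_eq_zero_or_one_div {E : ℕ → Type*} (x y : ∀ n, E n) :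
    dist x y = 0 ∨ ∃ n : ℕ, 1 ≤ n ∧ dist x y = 1 / n := by
  rcases eq_or_ne x y with rfl | hxy
  · exact .inl (PiNat.dist_self x)
  · refine .inr ⟨2 ^ PiNat.firstDiff x y, Nat.one_le_two_pow, ?_⟩
    rw [PiNat.dist_eq_of_ne hxy, one_div_pow, Nat.cast_pow, Nat.cast_ofNat]

end FirstDifference

section Cosets

variable {G : Type*} [Group G]

/-- The diagonal map `x ↦ (x V i)ᵢ` from a group to the product of the left coset spaces of a family
of subgroups. -/
def cosetMap {ι : Type*} (V : ι → Subgroup G) (x : G) (i : ι) : G ⧸ V i := x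

theorem cosetMap_mul_left_apply_eq_iff {ι : Type*} (V : ι → Subgroup G) (g x y : G) (i : ι) :
    cosetMap V (g * x) i = cosetMap V (g * y) i ↔ cosetMap V x i = cosetMap V y i := by
  simp only [cosetMap, QuotientGroup.eq, mul_inv_rev, mul_assoc, inv_mul_cancel_left]

variable [TopologicalSpace G]

theorem isInducing_cosetMap [IsTopologicalGroup G] {ι : Type*} {V : ι → OpenSubgroup G}
    (hV : (𝓝 (1 : G)).HasBasis (fun _ ↦ True) fun i ↦ (V i : Set G)) :
    IsInducing (cosetMap fun i ↦ (V i).toSubgroup) := by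
  refine isInducing_iff_nhds.2 fun x ↦ le_antisymm ?_ ?_
  · exact (continuous_pi fun _ ↦ QuotientGroup.continuous_mk).continuousAt.tendsto.le_comap
  · rw [← map_mul_left_nhds_one x, (hV.map (x * ·)).ge_iff]
    intro i _
    refine ⟨Function.eval i ⁻¹' {(x : G ⧸ (V i).toSubgroup)}, ?_, fun y hy ↦ ?_⟩
    · exact (continuous_apply i).continuousAt.preimage_mem_nhds (mem_nhds_discrete.2 rfl)
    · exact ⟨x⁻¹ * y, QuotientGroup.eq.1 hy.symm, mul_inv_cancel_left x y⟩

theorem exists_openSubgroup_seq_hasBasis_nhds_one [NonarchimedeanGroup G]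
    [FirstCountableTopology G] :
    ∃ V : ℕ → OpenSubgroup G, (𝓝 (1 : G)).HasBasis (fun _ ↦ True) fun n ↦ (V n : Set G) := by
  have hbasis : (𝓝 (1 : G)).HasBasis (fun _ ↦ True) fun V : OpenSubgroup G ↦ (V : Set G) :=
    ⟨fun s ↦ ⟨fun hs ↦ by simpa using NonarchimedeanGroup.is_nonarchimedean s hs,
      fun ⟨V, _, hVs⟩ ↦ mem_of_superset V.mem_nhds_one hVs⟩⟩
  obtain ⟨V, -, hV⟩ := hbasis.exists_antitone_subbasis
  exact ⟨V, hV.toHasBasis⟩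

end Cosets

theorem nonarchimedean_compatible_metric_general
    {G : Type*} [Group G] [tG : TopologicalSpace G] [NonarchimedeanGroup G]
    [FirstCountableTopology G] [T0Space G] :
    ∃ m : MetricSpace G,
      m.toUniformSpace.toTopologicalSpace = tG ∧
      @IsUltrametricDist G m.toDist ∧
      (∀ g x y : G, m.toDist.dist (g * x) (g * y) = m.toDist.dist x y) ∧
      (∀ x y : G, m.toDist.dist x y = 0 ∨ ∃ n : ℕ, 1 ≤ n ∧ m.toDist.dist x y = 1 / n) := by
  obtain ⟨V, hV⟩ := exists_openSubgroup_seq_hasBasis_nhds_one (G := G)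
  let f := cosetMap fun n ↦ (V n).toSubgroup
  have hf : IsEmbedding f := (isInducing_cosetMap hV).isEmbedding
  let _ : MetricSpace (∀ n, G ⧸ (V n).toSubgroup) := PiNat.metricSpace
  let m : MetricSpace G := hf.comapMetricSpace f
  refine ⟨m, rfl, ⟨fun x y z ↦ ?_⟩, fun g x y ↦ ?_, fun x y ↦ ?_⟩
  · exact PiNat.dist_triangle_nonarch (f x) (f y) (f z)
  · exact piNat_dist_congr (cosetMap_mul_left_apply_eq_iff _ g x y)
  · exact piNat_dist_eq_zero_or_one_div (f x) (f y)

/-- Every non-Archimedean Polish group admits a compatible left-invariant metric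
taking values only in `{0} ∪ {1/n : n ≥ 1}`. -/
theorem nonarchimedean_compatible_metric
    {G : Type*} [Group G] [tG : TopologicalSpace G] [NonarchimedeanGroup G]
    [PolishSpace G] :
    ∃ m : MetricSpace G,
      m.toUniformSpace.toTopologicalSpace = tG ∧
      (∀ g x y : G, m.toDist.dist (g * x) (g * y) = m.toDist.dist x y) ∧
      (∀ x y : G, m.toDist.dist x y = 0 ∨ ∃ n : ℕ, 1 ≤ n ∧ m.toDist.dist x y = 1 / n) := by
  obtain ⟨m, htop, -, hinv, hval⟩ := nonarchimedean_compatible_metric_general (G := G)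
  exact ⟨m, htop, hinv, hval⟩
end
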